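/- arXiv:1907.02132 — 2 statements merged into one kernel-verified Lean document; each statement's English description precedes it below -/
import Mathlib

section
/- The map ι : I_α → J defined by ι(η) = (η, 𝒟_η(·+)), where 𝒟_η(·+) is the right-continuous modification of the diversity function of η (extended to be constant on [‖η‖,∞]), is an isometric embedding of (I_α, d_α) into (J, d_J), and its image ι(I_α) is a Borel subset of (J, d_J); consequently, (I_α, d_α) is isometric to a Borel subset of a complete separable metric space, i.e. it is a Lusin metric space. -/
/-!
The embedding sends `η` to `(η, 𝒟_η(·+))`. A diversity function is constant on every open block and
on `[‖η‖, ∞)`, so passing to right limits changes neither its block values nor its total, and the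
two distortions agree correspondence by correspondence (`dJ_iotaPoint`).

For the Borel property, a set is open in `jTop` as soon as it contains, with each point, some ball
centred there, because a ball of positive radius contains its centre (`dJ_self_lt`); the triangle
inequality is not needed. If `dJ x y < r`, the blocks of `x` of mass at least `r` are matched
injectively with blocks of `y` having nearby mass, right endpoint and function value
(`exists_matching_of_dJ_lt`). Hence `x ↦ x.f t` is upper semicontinuous (`isOpen_f_lt`), and the
number of blocks of mass `> h` ending strictly before `t` is lower semicontinuous
(`isOpen_le_divCountLt`). By right-continuity in `t`, the counts `divCount x.part t h` are Borel.

It remains to describe the image by countably many conditions on `f` and these counts. Write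
`F_h(t) = Γ(1-a) h^a divCount t h`. A point `x` lies in the image iff (`ImageCond`)

* for rationals `0 ≤ s < t`, `f(s) - ε ≤ F_h(t) ≤ f(t) + ε` eventually as `h ↓ 0`, and
* for every rational `c`, `F_h` converges at the first passage time of `f` through `c`.

The first condition forces `F_h(t) → f(t)` wherever `f` is left-continuous, and identifies `f` with
the right-continuous diversity function. Every jump time of `f` is the first passage time through a
rational level inside the jump, so the second condition gives convergence at the remaining times.
The count at a first passage time is an infimum of counts over rational times `r` with `f(r) ≥ c`
(`levelCount`), hence Borel, and the thresholds `h` may be taken rational because the counts are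
right-continuous in `h` (`hasDiversity_of_ratZero`).
-/

open MeasureTheory Filter Topology Set

/-- An interval partition of `[0, L]`: a set of disjoint open subintervals whose
complement in `[0, L]` is Lebesgue-null. A block is encoded by its endpoint pair
`(a, b)` with `a < b`, representing the open interval `(a, b)`. -/
structure IntervalPartition where
  length : ℝ
  length_nonneg : 0 ≤ length
  blocks : Set (ℝ × ℝ)
  blocks_lt : ∀ p ∈ blocks, p.1 < p.2
  blocks_sub : ∀ p ∈ blocks, 0 ≤ p.1 ∧ p.2 ≤ length
  blocks_disjoint : ∀ p ∈ blocks, ∀ q ∈ blocks, p ≠ q →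
    Set.Ioo p.1 p.2 ∩ Set.Ioo q.1 q.2 = ∅
  compl_null : volume (Set.Icc 0 length \ ⋃ p ∈ blocks, Set.Ioo p.1 p.2) = 0

namespace IntervalPartition

/-- The mass (Lebesgue measure) of a block `(a, b)`. -/
def mass (p : ℝ × ℝ) : ℝ := p.2 - p.1

/-- The complement `C_β = [0, ‖β‖] \ ⋃_{U ∈ β} U`. -/
def cset (β : IntervalPartition) : Set ℝ :=
  Set.Icc 0 β.length \ ⋃ p ∈ β.blocks, Set.Ioo p.1 p.2

/-- A correspondence between `β` and `γ`: a finite sequence of pairs of blocks,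
strictly increasing in the left-to-right order in each coordinate. -/
def IsCorrespondence (β γ : IntervalPartition) (n : ℕ)
    (c : Fin n → (ℝ × ℝ) × (ℝ × ℝ)) : Prop :=
  (∀ j, (c j).1 ∈ β.blocks ∧ (c j).2 ∈ γ.blocks) ∧
  (∀ j k : Fin n, j < k → (c j).1.2 ≤ (c k).1.1 ∧ (c j).2.2 ≤ (c k).2.1)

/-- The Hausdorff distortion of a correspondence: the maximum of quantities
(i) and (ii) of the paper. -/
noncomputable def hausDistortion (β γ : IntervalPartition) (n : ℕ)
    (c : Fin n → (ℝ × ℝ) × (ℝ × ℝ)) : ℝ :=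
  max ((∑ j : Fin n, |mass (c j).1 - mass (c j).2|) + β.length - ∑ j : Fin n, mass (c j).1)
      ((∑ j : Fin n, |mass (c j).1 - mass (c j).2|) + γ.length - ∑ j : Fin n, mass (c j).2)

/-- The metric `d_H'`: infimum of the Hausdorff distortion over all correspondences. -/
noncomputable def dHp (β γ : IntervalPartition) : ℝ :=
  sInf {x | ∃ n, ∃ c : Fin n → (ℝ × ℝ) × (ℝ × ℝ),
    IsCorrespondence β γ n c ∧ x = hausDistortion β γ n c}

/-- The metric `d_H`: the Hausdorff distance between the complements. -/
noncomputable def dH (β γ : IntervalPartition) : ℝ :=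
  Metric.hausdorffDist β.cset γ.cset

/-- The number of blocks of mass `> h` ending at or before `t`. -/
noncomputable def divCount (β : IntervalPartition) (t h : ℝ) : ℕ :=
  Set.ncard {p : ℝ × ℝ | p ∈ β.blocks ∧ h < p.2 - p.1 ∧ p.2 ≤ t}

/-- `β` has `a`-diversity `d` at `t`:
`Γ(1-a) · lim_{h↓0} h^a · #{(x,y) ∈ β : y - x > h, y ≤ t} = d`. -/
def HasDiversity (a : ℝ) (β : IntervalPartition) (t d : ℝ) : Prop :=
  Tendsto (fun h : ℝ => Real.Gamma (1 - a) * h ^ a * (divCount β t h : ℝ))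
    (𝓝[>] 0) (𝓝 d)

/-- The `a`-diversity property: the diversity limit exists at every `t ∈ [0, ‖β‖]`. -/
def HasDiversityProp (a : ℝ) (β : IntervalPartition) : Prop :=
  ∀ t ∈ Set.Icc 0 β.length, ∃ d, HasDiversity a β t d

/-- The diversity function `𝒟_β(t)` (the value of the limit, when it exists). -/
noncomputable def diversity (a : ℝ) (β : IntervalPartition) (t : ℝ) : ℝ :=
  limUnder (𝓝[>] (0:ℝ)) (fun h : ℝ => Real.Gamma (1 - a) * h ^ a * (divCount β t h : ℝ))

/-- The total diversity `𝒟_β(∞) = 𝒟_β(‖β‖)`. -/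
noncomputable def totalDiversity (a : ℝ) (β : IntervalPartition) : ℝ :=
  diversity a β β.length

/-- The diversity `𝒟_β(U)` of a block `U`, evaluated at its midpoint. -/
noncomputable def blockDiversity (a : ℝ) (β : IntervalPartition) (p : ℝ × ℝ) : ℝ :=
  diversity a β ((p.1 + p.2) / 2)

/-- The `a`-distortion of a correspondence: the maximum of quantities (i)-(iv). -/
noncomputable def alphaDistortion (a : ℝ) (β γ : IntervalPartition) (n : ℕ)
    (c : Fin n → (ℝ × ℝ) × (ℝ × ℝ)) : ℝ :=
  max (hausDistortion β γ n c)
    (max (⨆ j : Fin n, |blockDiversity a β (c j).1 - blockDiversity a γ (c j).2|)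
         |totalDiversity a β - totalDiversity a γ|)

/-- The metric `d_α`: infimum of the `a`-distortion over all correspondences. -/
noncomputable def dA (a : ℝ) (β γ : IntervalPartition) : ℝ :=
  sInf {x | ∃ n, ∃ c : Fin n → (ℝ × ℝ) × (ℝ × ℝ),
    IsCorrespondence β γ n c ∧ x = alphaDistortion a β γ n c}

end IntervalPartition

/-- A point of the space `J`: an interval partition `η` together with an increasing,
right-continuous function `f` that is constant on every block of `η`, on `[‖η‖, ∞)`,
and (as `f` is defined on `[0, ∞]`) on `(-∞, 0]`. -/
structure JPoint where
  part : IntervalPartition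
  f : ℝ → ℝ
  f_nonneg : ∀ t, 0 ≤ f t
  f_mono : Monotone f
  f_rightCont : ∀ t, ContinuousWithinAt f (Set.Ici t) t
  f_const_block : ∀ p ∈ part.blocks, ∀ s ∈ Set.Ioo p.1 p.2, ∀ t ∈ Set.Ioo p.1 p.2, f s = f t
  f_const_top : ∀ t, part.length ≤ t → f t = f part.length
  f_const_neg : ∀ t, t ≤ (0:ℝ) → f t = f 0

/-- The distortion of a correspondence between two points of `J`: as the
`a`-distortion, but with `f`, `g` in place of the diversity functions. -/
noncomputable def jDistortion (x y : JPoint) (n : ℕ)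
    (c : Fin n → (ℝ × ℝ) × (ℝ × ℝ)) : ℝ :=
  max (IntervalPartition.hausDistortion x.part y.part n c)
    (max (⨆ j : Fin n, |x.f (((c j).1.1 + (c j).1.2) / 2) - y.f (((c j).2.1 + (c j).2.2) / 2)|)
         |x.f x.part.length - y.f y.part.length|)

/-- The metric `d_J` on `J`. -/
noncomputable def dJ (x y : JPoint) : ℝ :=
  sInf {r | ∃ n, ∃ c : Fin n → (ℝ × ℝ) × (ℝ × ℝ),
    IntervalPartition.IsCorrespondence x.part y.part n c ∧ r = jDistortion x y n c}

/-- The topology on `J` generated by the open `d_J`-balls (the topology of the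
metric `d_J`). -/
noncomputable def jTop : TopologicalSpace JPoint :=
  TopologicalSpace.generateFrom
    {s : Set JPoint | ∃ x : JPoint, ∃ r : ℝ, s = {y | dJ x y < r}}

/-! ### Blocks of an interval partition -/

namespace IntervalPartition

theorem mass_pos (β : IntervalPartition) {p : ℝ × ℝ} (hp : p ∈ β.blocks) : 0 < mass p :=
  sub_pos.2 (β.blocks_lt p hp)

/-- Distinct blocks are separated: the one starting first ends before the other starts. -/
theorem blocks_sep (β : IntervalPartition) {p q : ℝ × ℝ} (hp : p ∈ β.blocks) (hq : q ∈ β.blocks)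
    (h : p ≠ q) : p.2 ≤ q.1 ∨ q.2 ≤ p.1 := by
  by_contra! hc
  have h1 := β.blocks_lt p hp
  have h2 := β.blocks_lt q hq
  have hlt : max p.1 q.1 < min p.2 q.2 := by
    simp only [max_lt_iff, lt_min_iff]
    exact ⟨⟨h1, hc.1⟩, hc.2, h2⟩
  obtain ⟨u, hu1, hu2⟩ := exists_between hlt
  have hu : u ∈ Set.Ioo p.1 p.2 ∩ Set.Ioo q.1 q.2 := by
    simp only [max_lt_iff, lt_min_iff] at hu1 hu2
    exact ⟨⟨hu1.1, hu2.1⟩, hu1.2, hu2.2⟩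
  rw [β.blocks_disjoint p hp q hq h] at hu
  exact hu

/-- A finite family of distinct blocks inside `[lo, hi]` has total mass at most `hi - lo`. -/
theorem sum_mass_le (β : IntervalPartition) {ι : Type*} (S : Finset ι) (g : ι → ℝ × ℝ)
    (hg : ∀ i ∈ S, g i ∈ β.blocks) (hinj : Set.InjOn g S) {lo hi : ℝ} (hlh : lo ≤ hi)
    (hlo : ∀ i ∈ S, lo ≤ (g i).1) (hhi : ∀ i ∈ S, (g i).2 ≤ hi) :
    ∑ i ∈ S, mass (g i) ≤ hi - lo := by
  have hdisj : (S : Set ι).PairwiseDisjoint fun i => Set.Ioo (g i).1 (g i).2 := by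
    intro i hi' j hj hij
    exact Set.disjoint_iff_inter_eq_empty.2
      (β.blocks_disjoint _ (hg i hi') _ (hg j hj) fun h => hij (hinj hi' hj h))
  have h1 := measure_biUnion_finset (μ := volume) hdisj fun i _ => measurableSet_Ioo
  have h2 : volume (⋃ i ∈ S, Set.Ioo (g i).1 (g i).2) ≤ volume (Set.Ioo lo hi) := by
    refine measure_mono (Set.iUnion₂_subset fun i hi' => ?_)
    exact Set.Ioo_subset_Ioo (hlo i hi') (hhi i hi')
  rw [h1, Real.volume_Ioo] at h2
  simp only [Real.volume_Ioo] at h2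
  rw [← ENNReal.ofReal_sum_of_nonneg (f := fun i => (g i).2 - (g i).1)
    fun i hi' => (β.mass_pos (hg i hi')).le] at h2
  exact (ENNReal.ofReal_le_ofReal_iff (sub_nonneg.2 hlh)).1 h2

theorem sum_mass_le_length (β : IntervalPartition) {ι : Type*} (S : Finset ι) (g : ι → ℝ × ℝ)
    (hg : ∀ i ∈ S, g i ∈ β.blocks) (hinj : Set.InjOn g S) :
    ∑ i ∈ S, mass (g i) ≤ β.length := by
  simpa using β.sum_mass_le S g hg hinj β.length_nonneg
    (fun i hi => (β.blocks_sub _ (hg i hi)).1) (fun i hi => (β.blocks_sub _ (hg i hi)).2)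

theorem finite_large (β : IntervalPartition) {h : ℝ} (hh : 0 < h) :
    {p : ℝ × ℝ | p ∈ β.blocks ∧ h < p.2 - p.1}.Finite := by
  by_contra hinf
  obtain ⟨n, hn⟩ := exists_nat_gt (β.length / h)
  obtain ⟨S, hS, hcard⟩ := Set.Infinite.exists_subset_card_eq hinf n
  have h1 := β.sum_mass_le_length S id (fun i hi => (hS hi).1) (Set.injOn_id _)
  have h2 : S.card • h ≤ ∑ i ∈ S, mass (id i) :=
    Finset.card_nsmul_le_sum _ _ _ fun p hp => (hS hp).2.le
  rw [hcard, nsmul_eq_mul] at h2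
  rw [div_lt_iff₀ hh] at hn
  linarith

/-- The blocks are dense in `[0, ‖β‖]`. -/
theorem exists_block_meets (β : IntervalPartition) {s t : ℝ} (hs : 0 ≤ s) (hst : s < t)
    (ht : t ≤ β.length) : ∃ p ∈ β.blocks, ∃ u ∈ Set.Ioo s t, u ∈ Set.Ioo p.1 p.2 := by
  by_contra! hc
  have hsub : Set.Ioo s t ⊆ Set.Icc 0 β.length \ ⋃ p ∈ β.blocks, Set.Ioo p.1 p.2 := by
    intro u hu
    refine ⟨⟨hs.trans hu.1.le, hu.2.le.trans ht⟩, ?_⟩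
    simp only [Set.mem_iUnion, not_exists]
    exact fun p hp => hc p hp u hu
  have h0 := measure_mono_null hsub β.compl_null
  rw [Real.volume_Ioo, ENNReal.ofReal_eq_zero] at h0
  linarith

theorem blocks_countable (β : IntervalPartition) : β.blocks.Countable := by
  have : β.blocks = ⋃ n : ℕ, {p : ℝ × ℝ | p ∈ β.blocks ∧ 1 / ((n : ℝ) + 1) < p.2 - p.1} := by
    ext p
    simp only [Set.mem_iUnion, Set.mem_ofPred_eq, exists_and_left]
    exact ⟨fun hp => ⟨hp, exists_nat_one_div_lt (β.mass_pos hp)⟩, fun hp => hp.1⟩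
  rw [this]
  exact Set.countable_iUnion fun n => (β.finite_large (by positivity)).countable

/-- Finitely many blocks carry all but `ε` of the total mass. -/
theorem exists_finset_mass (β : IntervalPartition) {ε : ℝ} (hε : 0 < ε) :
    ∃ S : Finset (ℝ × ℝ), ↑S ⊆ β.blocks ∧ β.length - ε < ∑ p ∈ S, mass p := by
  rcases lt_or_ge (β.length - ε) 0 with hneg | hpos
  · exact ⟨∅, by simp, by simpa using hneg⟩
  have hdisj : β.blocks.PairwiseDisjoint fun p => Set.Ioo p.1 p.2 := fun p hp q hq hpq =>
    Set.disjoint_iff_inter_eq_empty.2 (β.blocks_disjoint p hp q hq hpq)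
  have h1 := measure_biUnion (μ := volume) β.blocks_countable hdisj fun i _ => measurableSet_Ioo
  have h2 : ENNReal.ofReal β.length ≤ volume (⋃ p ∈ β.blocks, Set.Ioo p.1 p.2) := by
    have h3 : volume (Set.Icc 0 β.length) ≤
        volume (Set.Icc 0 β.length \ ⋃ p ∈ β.blocks, Set.Ioo p.1 p.2) +
          volume (⋃ p ∈ β.blocks, Set.Ioo p.1 p.2) := by
      refine (measure_mono ?_).trans (measure_union_le _ _)
      rw [Set.sdiff_union_self]
      exact Set.subset_union_left
    rwa [β.compl_null, zero_add, Real.volume_Icc, sub_zero] at h3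
  have h4 : ENNReal.ofReal (β.length - ε) < ENNReal.ofReal β.length :=
    (ENNReal.ofReal_lt_ofReal_iff (by linarith)).2 (by linarith)
  have h5 := h4.trans_le h2
  rw [h1, ENNReal.tsum_eq_iSup_sum, lt_iSup_iff] at h5
  obtain ⟨S, hS⟩ := h5
  refine ⟨S.map (Function.Embedding.subtype _), ?_, ?_⟩
  · intro p hp
    simp only [Finset.coe_map, Set.mem_image] at hp
    obtain ⟨q, _, rfl⟩ := hp
    exact q.2
  · simp only [Real.volume_Ioo] at hS
    rw [← ENNReal.ofReal_sum_of_nonneg (f := fun p : β.blocks => p.1.2 - p.1.1)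
      fun i _ => (β.mass_pos i.2).le] at hS
    rw [Finset.sum_map]
    exact (ENNReal.ofReal_lt_ofReal_iff_of_nonneg hpos).1 hS

end IntervalPartition

/-! ### Correspondences and the topology of `J` -/

namespace IntervalPartition

theorem IsCorrespondence.injective_fst {β γ : IntervalPartition} {n : ℕ}
    {c : Fin n → (ℝ × ℝ) × (ℝ × ℝ)} (hc : IsCorrespondence β γ n c) :
    Function.Injective fun j => (c j).1 := by
  have key : ∀ i j, i < j → (c i).1 ≠ (c j).1 := by
    intro i j hij h
    have h1 := (hc.2 i j hij).1
    rw [h] at h1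
    exact absurd (β.blocks_lt _ (hc.1 j).1) (not_lt.2 h1)
  intro i j h
  rcases lt_trichotomy i j with hij | hij | hij
  · exact absurd h (key i j hij)
  · exact hij
  · exact absurd h.symm (key j i hij)

theorem IsCorrespondence.swap {β γ : IntervalPartition} {n : ℕ}
    {c : Fin n → (ℝ × ℝ) × (ℝ × ℝ)} (hc : IsCorrespondence β γ n c) :
    IsCorrespondence γ β n fun j => (c j).swap :=
  ⟨fun j => (hc.1 j).symm, fun j k h => (hc.2 j k h).symm⟩

/-- A correspondence leaves a nonnegative amount of mass unmatched. -/
theorem IsCorrespondence.sum_le {β γ : IntervalPartition} {n : ℕ}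
    {c : Fin n → (ℝ × ℝ) × (ℝ × ℝ)} (hc : IsCorrespondence β γ n c) :
    ∑ j, mass (c j).1 ≤ β.length :=
  β.sum_mass_le_length _ _ (fun j _ => (hc.1 j).1) hc.injective_fst.injOn

/-- Blocks heavier than the distortion cannot be left unmatched. -/
theorem IsCorrespondence.exists_match {β γ : IntervalPartition} {n : ℕ}
    {c : Fin n → (ℝ × ℝ) × (ℝ × ℝ)} (hc : IsCorrespondence β γ n c) {r : ℝ}
    (hr : (∑ j, |mass (c j).1 - mass (c j).2|) + β.length - ∑ j, mass (c j).1 < r)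
    {p : ℝ × ℝ} (hp : p ∈ β.blocks) (hpr : r ≤ mass p) : ∃ j, (c j).1 = p := by
  by_contra! hne
  let g : Option (Fin n) → ℝ × ℝ := fun o => o.elim p fun j => (c j).1
  have h1 : ∑ i, mass (g i) ≤ β.length := by
    refine β.sum_mass_le_length _ _ ?_ ?_
    · rintro (_ | j) _
      exacts [hp, (hc.1 j).1]
    · rintro (_ | i) _ (_ | j) _ h
      · rfl
      · exact absurd h.symm (hne j)
      · exact absurd h (hne i)
      · exact congrArg some (hc.injective_fst h)
  rw [Fintype.sum_option] at h1
  have h2 : 0 ≤ ∑ j, |mass (c j).1 - mass (c j).2| := Finset.sum_nonneg fun _ _ => abs_nonneg _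
  simp only [g, Option.elim_none, Option.elim_some] at h1
  linarith

/-- Matched blocks end at nearby positions. The mass right of the first block is at least that of
the later matched blocks, and the mass left of the end of the second block at least that of the
earlier ones, so that only mass differences and unmatched mass enter. -/
theorem IsCorrespondence.right_end_sub_le {β γ : IntervalPartition} {n : ℕ}
    {c : Fin n → (ℝ × ℝ) × (ℝ × ℝ)} (hc : IsCorrespondence β γ n c) (j : Fin n) :
    (c j).1.2 - (c j).2.2 ≤
      (∑ j, |mass (c j).1 - mass (c j).2|) + β.length - ∑ j, mass (c j).1 := by
  have h1 : ∑ i ∈ Finset.univ.filter (fun i => ¬ i ≤ j), mass (c i).1 ≤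
      β.length - (c j).1.2 := by
    refine β.sum_mass_le _ _ (fun i _ => (hc.1 i).1) hc.injective_fst.injOn
      (β.blocks_sub _ (hc.1 j).1).2 (fun i hi => ?_) fun i _ => (β.blocks_sub _ (hc.1 i).1).2
    exact (hc.2 j i (not_le.1 (Finset.mem_filter.1 hi).2)).1
  have h2 : ∑ i ∈ Finset.univ.filter (fun i => i ≤ j), mass (c i).2 ≤ (c j).2.2 - 0 := by
    refine γ.sum_mass_le _ _ (fun i _ => (hc.1 i).2) hc.swap.injective_fst.injOn
      ?_ (fun i _ => (γ.blocks_sub _ (hc.1 i).2).1) fun i hi => ?_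
    · exact (γ.blocks_sub _ (hc.1 j).2).1.trans (γ.blocks_lt _ (hc.1 j).2).le
    · rcases (Finset.mem_filter.1 hi).2.lt_or_eq with h | h
      · exact (hc.2 i j h).2.trans (γ.blocks_lt _ (hc.1 j).2).le
      · rw [h]
  have h3 := Finset.sum_filter_add_sum_filter_not Finset.univ (fun i => i ≤ j)
    fun i => mass (c i).1
  have h4 : ∑ i ∈ Finset.univ.filter (fun i => i ≤ j), (mass (c i).1 - mass (c i).2) ≤
      ∑ i, |mass (c i).1 - mass (c i).2| := by
    refine (Finset.sum_le_sum fun i _ => le_abs_self _).trans ?_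
    exact Finset.sum_le_sum_of_subset_of_nonneg (Finset.filter_subset _ _)
      fun _ _ _ => abs_nonneg _
  rw [Finset.sum_sub_distrib] at h4
  linarith

end IntervalPartition

open IntervalPartition

/-- If `dJ x y < r`, every block of `x` of mass at least `r` is matched with a block of `y` having
a nearby right endpoint, a nearby mass and a nearby value of the function, injectively. -/
theorem exists_matching_of_dJ_lt {x y : JPoint} {r : ℝ} (h : dJ x y < r) :
    |x.f x.part.length - y.f y.part.length| < r ∧
    ∃ R : ℝ × ℝ → ℝ × ℝ, (∀ p ∈ x.part.blocks, r ≤ mass p → R p ∈ y.part.blocks ∧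
      |p.2 - (R p).2| < r ∧ |mass p - mass (R p)| < r ∧
      |x.f ((p.1 + p.2) / 2) - y.f (((R p).1 + (R p).2) / 2)| < r) ∧
      Set.InjOn R {p | p ∈ x.part.blocks ∧ r ≤ mass p} := by
  classical
  have hne : {r | ∃ n, ∃ c : Fin n → (ℝ × ℝ) × (ℝ × ℝ),
    IsCorrespondence x.part y.part n c ∧ r = jDistortion x y n c}.Nonempty :=
    ⟨_, 0, Fin.elim0, ⟨fun j => j.elim0, fun j => j.elim0⟩, rfl⟩
  obtain ⟨_, ⟨n, c, hc, rfl⟩, hlt⟩ := exists_lt_of_csInf_lt hne h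
  simp only [jDistortion, hausDistortion, max_lt_iff] at hlt
  obtain ⟨⟨hl, hr⟩, hs, ht⟩ := hlt
  refine ⟨ht, ?_⟩
  have hm : ∀ p, ∃ q, p ∈ x.part.blocks → r ≤ mass p → ∃ j, c j = (p, q) := by
    intro p
    by_cases hp : p ∈ x.part.blocks ∧ r ≤ mass p
    · obtain ⟨j, hj⟩ := hc.exists_match hl hp.1 hp.2
      exact ⟨(c j).2, fun _ _ => ⟨j, by rw [← hj]⟩⟩
    · exact ⟨p, fun h1 h2 => absurd ⟨h1, h2⟩ hp⟩
  choose R hR using hm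
  refine ⟨R, fun p hp hpr => ?_, ?_⟩
  · obtain ⟨j, hj⟩ := hR p hp hpr
    have e1 : (c j).1 = p := by rw [hj]
    have e2 : (c j).2 = R p := by rw [hj]
    refine ⟨e2 ▸ (hc.1 j).2, ?_, ?_, ?_⟩
    · have h1 := hc.right_end_sub_le j
      have h2 := hc.swap.right_end_sub_le j
      simp only [Prod.fst_swap, Prod.snd_swap, abs_sub_comm (mass (c _).2)] at h2
      rw [e1, e2] at h1 h2
      rw [abs_lt]
      constructor <;> linarith
    · have h1 := Finset.single_le_sum (f := fun j => |mass (c j).1 - mass (c j).2|)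
        (fun _ _ => abs_nonneg _) (Finset.mem_univ j)
      simp only [e1, e2] at h1
      have h2 := hc.sum_le
      linarith
    · have h1 := le_ciSup (f := fun j => |x.f (((c j).1.1 + (c j).1.2) / 2) -
        y.f (((c j).2.1 + (c j).2.2) / 2)|) (Set.finite_range _).bddAbove j
      simp only [e1, e2] at h1
      exact h1.trans_lt hs
  · rintro p ⟨hp, hpr⟩ q ⟨hq, hqr⟩ hpq
    obtain ⟨i, hi⟩ := hR p hp hpr
    obtain ⟨j, hj⟩ := hR q hq hqr
    have hij : i = j := hc.swap.injective_fst (by simp [hi, hj, hpq])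
    subst hij
    exact congrArg Prod.fst (hi.symm.trans hj)

/-- Every ball of positive radius contains its centre: the identical correspondence on finitely
many blocks carrying nearly all the mass has small distortion. -/
theorem dJ_self_lt (x : JPoint) {r : ℝ} (hr : 0 < r) : dJ x x < r := by
  obtain ⟨S, hS, hmass⟩ := x.part.exists_finset_mass hr
  -- Blocks are listed from left to right by sorting `S` lexicographically.
  let T : Finset (ℝ ×ₗ ℝ) := S.map toLex.toEmbedding
  let e := T.orderEmbOfFin rfl
  have he : ∀ j, ofLex (e j) ∈ S := by
    intro j
    have h1 := Finset.orderEmbOfFin_mem T rfl j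
    obtain ⟨p, hp, hpe⟩ := Finset.mem_map.1 h1
    rw [show e j = toLex p from hpe.symm]
    exact hp
  let c : Fin T.card → (ℝ × ℝ) × (ℝ × ℝ) := fun j => (ofLex (e j), ofLex (e j))
  have hc : IsCorrespondence x.part x.part _ c := by
    refine ⟨fun j => ⟨hS (he j), hS (he j)⟩, fun j k hjk => ?_⟩
    suffices h : (ofLex (e j)).2 ≤ (ofLex (e k)).1 from ⟨h, h⟩
    have hlt : e j < e k := e.strictMono hjk
    rcases x.part.blocks_sep (hS (he j)) (hS (he k)) (fun h => hlt.ne (ofLex.injective h))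
      with h | h
    · exact h
    · have h1 := x.part.blocks_lt _ (hS (he k))
      have h2 := x.part.blocks_lt _ (hS (he j))
      rcases Prod.Lex.lt_iff.1 hlt with h3 | ⟨h3, _⟩ <;> linarith
  have hsum : ∑ j, mass (c j).1 = ∑ p ∈ S, mass p := by
    refine Finset.sum_bij (fun j _ => ofLex (e j)) (fun j _ => he j)
      (fun i _ j _ h => e.injective (ofLex.injective h)) (fun p hp => ?_) fun _ _ => rfl
    have h1 : toLex p ∈ Set.range e := by
      rw [Finset.range_orderEmbOfFin]
      exact Finset.mem_coe.2 (Finset.mem_map.2 ⟨p, hp, rfl⟩)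
    obtain ⟨j, hj⟩ := h1
    exact ⟨j, Finset.mem_univ _, by rw [hj]; rfl⟩
  refine csInf_lt_of_lt ⟨0, ?_⟩ ⟨_, c, hc, rfl⟩ ?_
  · rintro _ ⟨n, c, _, rfl⟩
    exact le_max_of_le_right (le_max_of_le_right (abs_nonneg _))
  · have h2 : ∀ j, (c j).2 = (c j).1 := fun j => rfl
    simp only [jDistortion, hausDistortion, max_lt_iff, h2, sub_self, abs_zero,
      Finset.sum_const_zero, zero_add, hsum]
    refine ⟨⟨by linarith, by linarith⟩, ?_, hr⟩
    rwa [Real.iSup_const_zero]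

theorem isOpen_jTop_of_forall_ball {s : Set JPoint}
    (h : ∀ x ∈ s, ∃ r > 0, ∀ y, dJ x y < r → y ∈ s) : IsOpen[jTop] s := by
  let _ := jTop
  rw [isOpen_iff_forall_mem_open]
  intro x hx
  obtain ⟨r, hr, hxr⟩ := h x hx
  exact ⟨{y | dJ x y < r}, hxr, TopologicalSpace.isOpen_generateFrom_of_mem ⟨x, r, rfl⟩,
    dJ_self_lt x hr⟩

/-- `f` is bounded by its value on any block reaching beyond `t`. -/
theorem JPoint.f_le_block (x : JPoint) {p : ℝ × ℝ} (hp : p ∈ x.part.blocks) {t : ℝ}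
    (ht : t < p.2) : x.f t ≤ x.f ((p.1 + p.2) / 2) := by
  have hlt := x.part.blocks_lt p hp
  obtain ⟨u, hu1, hu2⟩ := exists_between (max_lt ht hlt)
  rw [max_lt_iff] at hu1
  rw [x.f_const_block p hp ((p.1 + p.2) / 2) ⟨by linarith, by linarith⟩ u ⟨hu1.2, hu2⟩]
  exact x.f_mono hu1.1.le

theorem JPoint.f_le_top (x : JPoint) (t : ℝ) : x.f t ≤ x.f x.part.length := by
  rcases le_total t x.part.length with h | h
  · exact x.f_mono h
  · exact (x.f_const_top t h).le

theorem isOpen_f_lt (t c : ℝ) : IsOpen[jTop] {x : JPoint | x.f t < c} := by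
  refine isOpen_jTop_of_forall_ball fun x (hx : x.f t < c) => ?_
  rcases lt_or_ge (max t 0) x.part.length with htL | htL
  · -- A block of `x` slightly right of `t` on which `x.f` is still below `c` bounds `y.f t`.
    have h1 : x.f (max t 0) < c := by
      rcases le_total t 0 with h | h
      · rwa [max_eq_right h, ← x.f_const_neg t h]
      · rwa [max_eq_left h]
    have h2 := (x.f_rightCont (max t 0)).mono Set.Ioi_subset_Ici_self
    obtain ⟨s, hs1, hs2, hs3⟩ := ((h2.eventually_lt_const h1).and
      (Ioo_mem_nhdsGT htL)).exists
    obtain ⟨p, hp, u, hu1, hu2⟩ := x.part.exists_block_meets (le_max_right t 0) hs2 hs3.le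
    have hlt := x.part.blocks_lt p hp
    have hfp : x.f ((p.1 + p.2) / 2) < c := by
      rw [x.f_const_block p hp ((p.1 + p.2) / 2) ⟨by linarith, by linarith⟩ u hu2]
      exact (x.f_mono hu1.2.le).trans_lt hs1
    have htp : t < p.2 := (le_max_left t 0).trans_lt (hu1.1.trans hu2.2)
    refine ⟨min (mass p) (min (p.2 - t) (c - x.f ((p.1 + p.2) / 2))),
      lt_min (x.part.mass_pos hp) (lt_min (by linarith) (by linarith)), fun y hy => ?_⟩
    obtain ⟨_, R, hR, _⟩ := exists_matching_of_dJ_lt hy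
    obtain ⟨hq, hq1, _, hq2⟩ := hR p hp (min_le_left _ _)
    simp only [lt_min_iff, abs_lt] at hq1 hq2
    have := y.f_le_block hq (t := t) (by linarith [hq1.2.2.1])
    exact this.trans_lt (by linarith [hq2.2.2.2, hq2.1])
  · have htop : x.f t = x.f x.part.length := by
      rcases le_total t 0 with h | h
      · rw [max_eq_right h] at htL
        rw [x.f_const_neg t h, x.f_const_top 0 htL]
      · rw [max_eq_left h] at htL
        exact x.f_const_top t htL
    refine ⟨c - x.f t, by linarith, fun y hy => ?_⟩
    have h1 := (abs_lt.1 (exists_matching_of_dJ_lt hy).1).1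
    exact (y.f_le_top t).trans_lt (by linarith)

/-- The number of blocks of mass greater than `h` ending strictly before `t`. -/
noncomputable def divCountLt (β : IntervalPartition) (t h : ℝ) : ℕ :=
  Set.ncard {p : ℝ × ℝ | p ∈ β.blocks ∧ h < p.2 - p.1 ∧ p.2 < t}

theorem isOpen_le_divCountLt (t : ℝ) {h : ℝ} (hh : 0 < h) (k : ℕ) :
    IsOpen[jTop] {x : JPoint | k ≤ divCountLt x.part t h} := by
  refine isOpen_jTop_of_forall_ball fun x (hx : k ≤ divCountLt x.part t h) => ?_
  set B := {p : ℝ × ℝ | p ∈ x.part.blocks ∧ h < p.2 - p.1 ∧ p.2 < t} with hB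
  have hBfin : B.Finite := (x.part.finite_large hh).subset fun p hp => ⟨hp.1, hp.2.1⟩
  obtain ⟨r, hr, hrB⟩ : ∃ r > 0, ∀ p ∈ B, r ≤ mass p ∧ r ≤ mass p - h ∧ r ≤ t - p.2 := by
    have : ∀ᶠ r in 𝓝[>] (0 : ℝ), ∀ p ∈ B, r ≤ mass p ∧ r ≤ mass p - h ∧ r ≤ t - p.2 := by
      refine (hBfin.eventually_all).2 fun p hp => ?_
      have h1 : 0 < min (mass p - h) (t - p.2) := lt_min (sub_pos.2 hp.2.1) (sub_pos.2 hp.2.2)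
      filter_upwards [Ioo_mem_nhdsGT h1] with r hr
      have h2 := lt_min_iff.1 hr.2
      exact ⟨by linarith, h2.1.le, h2.2.le⟩
    obtain ⟨r, hr1, hr2⟩ := (this.and self_mem_nhdsWithin).exists
    exact ⟨r, hr2, hr1⟩
  refine ⟨r, hr, fun y hy => hx.trans ?_⟩
  obtain ⟨_, R, hR, hinj⟩ := exists_matching_of_dJ_lt hy
  have hsub : B ⊆ {p | p ∈ x.part.blocks ∧ r ≤ mass p} := fun p hp => ⟨hp.1, (hrB p hp).1⟩
  refine Set.ncard_le_ncard_of_injOn R (fun p hp => ?_) (hinj.mono hsub)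
    ((y.part.finite_large hh).subset fun p hp => ⟨hp.1, hp.2.1⟩)
  obtain ⟨hq, hq1, hq2, _⟩ := hR p hp.1 (hrB p hp).1
  obtain ⟨_, hr1, hr2⟩ := hrB p hp
  rw [abs_lt] at hq1 hq2
  refine ⟨hq, ?_, by linarith⟩
  change h < mass (R p)
  linarith

/-! ### Diversity functions and the embedding -/

namespace IntervalPartition

theorem divCount_mono (β : IntervalPartition) {h : ℝ} (hh : 0 < h) {s t : ℝ} (hst : s ≤ t) :
    divCount β s h ≤ divCount β t h :=
  Set.ncard_le_ncard (fun _ hp => ⟨hp.1, hp.2.1, hp.2.2.trans hst⟩)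
    ((β.finite_large hh).subset fun _ hp => ⟨hp.1, hp.2.1⟩)

theorem divCount_le_divCountLt (β : IntervalPartition) {h : ℝ} (hh : 0 < h) {s t : ℝ}
    (hst : s < t) : divCount β s h ≤ divCountLt β t h :=
  Set.ncard_le_ncard (fun _ hp => ⟨hp.1, hp.2.1, hp.2.2.trans_lt hst⟩)
    ((β.finite_large hh).subset fun _ hp => ⟨hp.1, hp.2.1⟩)

theorem divCountLt_le_divCount (β : IntervalPartition) {h : ℝ} (hh : 0 < h) (t : ℝ) :
    divCountLt β t h ≤ divCount β t h :=
  Set.ncard_le_ncard (fun _ hp => ⟨hp.1, hp.2.1, hp.2.2.le⟩)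
    ((β.finite_large hh).subset fun _ hp => ⟨hp.1, hp.2.1⟩)

theorem divCount_of_nonpos (β : IntervalPartition) {t : ℝ} (ht : t ≤ 0) (h : ℝ) :
    divCount β t h = 0 := by
  have : {p : ℝ × ℝ | p ∈ β.blocks ∧ h < p.2 - p.1 ∧ p.2 ≤ t} = ∅ := by
    refine Set.eq_empty_iff_forall_notMem.2 fun p hp => ?_
    have h1 := (β.blocks_sub p hp.1).1
    have h2 := β.blocks_lt p hp.1
    linarith [hp.2.2]
  rw [divCount, this, Set.ncard_empty]

theorem divCount_of_length_le (β : IntervalPartition) {t : ℝ} (ht : β.length ≤ t) (h : ℝ) :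
    divCount β t h = divCount β β.length h := by
  unfold divCount
  congr 1
  ext p
  exact ⟨fun hp => ⟨hp.1, hp.2.1, (β.blocks_sub p hp.1).2⟩,
    fun hp => ⟨hp.1, hp.2.1, hp.2.2.trans ht⟩⟩

theorem divCount_block (β : IntervalPartition) {p : ℝ × ℝ} (hp : p ∈ β.blocks) {s t : ℝ}
    (hs : s ∈ Set.Ioo p.1 p.2) (ht : t ∈ Set.Ioo p.1 p.2) (h : ℝ) :
    divCount β s h = divCount β t h := by
  have key : ∀ {s t : ℝ}, s ∈ Set.Ioo p.1 p.2 → t ∈ Set.Ioo p.1 p.2 →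
      ∀ q ∈ β.blocks, q.2 ≤ s → q.2 ≤ t := by
    intro s t hs ht q hq hqs
    have h1 := β.blocks_lt q hq
    rcases eq_or_ne p q with rfl | hne
    · exact absurd hs.2 (not_lt.2 hqs)
    rcases β.blocks_sep hp hq hne with h2 | h2
    · linarith [hs.2]
    · linarith [ht.1]
  unfold divCount
  congr 1
  ext q
  exact ⟨fun hq => ⟨hq.1, hq.2.1, key hs ht q hq.1 hq.2.2⟩,
    fun hq => ⟨hq.1, hq.2.1, key ht hs q hq.1 hq.2.2⟩⟩

/-- The counting function is right-continuous in the position. -/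
theorem exists_gt_divCountLt_le (β : IntervalPartition) {h : ℝ} (hh : 0 < h) (t : ℝ) :
    ∃ s > t, divCountLt β s h ≤ divCount β t h := by
  have hfin : {p : ℝ × ℝ | p ∈ β.blocks ∧ h < p.2 - p.1 ∧ t < p.2}.Finite :=
    (β.finite_large hh).subset fun _ hp => ⟨hp.1, hp.2.1⟩
  have hev : ∀ᶠ s in 𝓝[>] t, ∀ p ∈ {p : ℝ × ℝ | p ∈ β.blocks ∧ h < p.2 - p.1 ∧ t < p.2},
      s ≤ p.2 := by
    refine hfin.eventually_all.2 fun p hp => ?_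
    filter_upwards [Ioo_mem_nhdsGT hp.2.2] with s hs using hs.2.le
  obtain ⟨s, hs, hts⟩ := (hev.and self_mem_nhdsWithin).exists
  refine ⟨s, hts, Set.ncard_le_ncard (fun p hp => ⟨hp.1, hp.2.1, ?_⟩)
    ((β.finite_large hh).subset fun _ hp => ⟨hp.1, hp.2.1⟩)⟩
  by_contra! hlt
  exact absurd hp.2.2 (not_lt.2 (hs p ⟨hp.1, hp.2.1, hlt⟩))

/-- The counting function is right-continuous in the mass threshold. -/
theorem eventually_divCount_eq (β : IntervalPartition) {h : ℝ} (hh : 0 < h) (t : ℝ) :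
    ∀ᶠ h' in 𝓝[>] h, divCount β t h' = divCount β t h := by
  have hev : ∀ᶠ h' in 𝓝[>] h, ∀ p ∈ {p : ℝ × ℝ | p ∈ β.blocks ∧ h < p.2 - p.1},
      h' < p.2 - p.1 := by
    refine (β.finite_large hh).eventually_all.2 fun p hp => ?_
    filter_upwards [Ioo_mem_nhdsGT hp.2] with s hs using hs.2
  filter_upwards [hev, self_mem_nhdsWithin] with h' h1 h2
  unfold divCount
  congr 1
  ext p
  exact ⟨fun hp => ⟨hp.1, lt_trans h2 hp.2.1, hp.2.2⟩,
    fun hp => ⟨hp.1, h1 p ⟨hp.1, hp.2.1⟩, hp.2.2⟩⟩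

section Diversity

variable {a : ℝ} {β : IntervalPartition}

/-- The rescaled count whose limit as `h ↓ 0` is the diversity at `t`. -/
noncomputable def scaledCount (a : ℝ) (β : IntervalPartition) (t h : ℝ) : ℝ :=
  Real.Gamma (1 - a) * h ^ a * (divCount β t h : ℝ)

theorem scale_pos (ha' : a < 1) {h : ℝ} (hh : 0 < h) : 0 < Real.Gamma (1 - a) * h ^ a :=
  mul_pos (Real.Gamma_pos_of_pos (by linarith)) (Real.rpow_pos_of_pos hh a)

theorem scaledCount_mono (ha' : a < 1) {h : ℝ} (hh : 0 < h) {s t : ℝ} (hst : s ≤ t) :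
    scaledCount a β s h ≤ scaledCount a β t h :=
  mul_le_mul_of_nonneg_left (Nat.cast_le.2 (β.divCount_mono hh hst)) (scale_pos ha' hh).le

theorem scaledCount_nonneg (ha' : a < 1) {h : ℝ} (hh : 0 < h) (t : ℝ) :
    0 ≤ scaledCount a β t h :=
  mul_nonneg (scale_pos ha' hh).le (Nat.cast_nonneg _)

/-- The diversity limit exists on all of `ℝ`, the counts being constant off `[0, ‖β‖]`. -/
theorem HasDiversityProp.hasDiversity (hβ : HasDiversityProp a β) (t : ℝ) :
    HasDiversity a β t (diversity a β t) := by
  have : ∃ d, HasDiversity a β t d := by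
    rcases lt_or_ge t 0 with h0 | h0
    · refine ⟨0, ?_⟩
      simp only [HasDiversity, β.divCount_of_nonpos h0.le, Nat.cast_zero, mul_zero]
      exact tendsto_const_nhds
    rcases le_total t β.length with hL | hL
    · exact hβ t ⟨h0, hL⟩
    · obtain ⟨d, hd⟩ := hβ β.length ⟨β.length_nonneg, le_rfl⟩
      refine ⟨d, ?_⟩
      simpa only [HasDiversity, β.divCount_of_length_le hL] using hd
  exact tendsto_nhds_limUnder this

theorem HasDiversityProp.monotone (ha' : a < 1) (hβ : HasDiversityProp a β) :
    Monotone (diversity a β) := fun s t hst =>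
  le_of_tendsto_of_tendsto (hβ.hasDiversity s) (hβ.hasDiversity t)
    (eventually_nhdsWithin_of_forall fun _ hh => scaledCount_mono ha' hh hst)

theorem HasDiversityProp.nonneg (ha' : a < 1) (hβ : HasDiversityProp a β) (t : ℝ) :
    0 ≤ diversity a β t :=
  ge_of_tendsto (hβ.hasDiversity t)
    (eventually_nhdsWithin_of_forall fun _ hh => scaledCount_nonneg ha' hh t)

theorem diversity_of_length_le (a : ℝ) (β : IntervalPartition) {t : ℝ} (ht : β.length ≤ t) :
    diversity a β t = totalDiversity a β := by
  simp only [totalDiversity, diversity, β.divCount_of_length_le ht]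

theorem diversity_block (a : ℝ) (β : IntervalPartition) {p : ℝ × ℝ} (hp : p ∈ β.blocks) {s t : ℝ}
    (hs : s ∈ Set.Ioo p.1 p.2) (ht : t ∈ Set.Ioo p.1 p.2) :
    diversity a β s = diversity a β t := by
  simp only [diversity, β.divCount_block hp hs ht]

theorem rightLim_diversity_block (a : ℝ) (β : IntervalPartition) {p : ℝ × ℝ}
    (hp : p ∈ β.blocks) {s : ℝ} (hs : s ∈ Set.Ioo p.1 p.2) :
    Function.rightLim (diversity a β) s = diversity a β s := by
  refine rightLim_eq_of_tendsto (tendsto_const_nhds.congr' ?_)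
  filter_upwards [Ioo_mem_nhdsGT hs.2] with t ht
  exact diversity_block a β hp hs ⟨hs.1.trans ht.1, ht.2⟩

theorem rightLim_diversity_of_length_le (a : ℝ) (β : IntervalPartition) {t : ℝ}
    (ht : β.length ≤ t) : Function.rightLim (diversity a β) t = totalDiversity a β := by
  refine rightLim_eq_of_tendsto (tendsto_const_nhds.congr' ?_)
  filter_upwards [self_mem_nhdsWithin] with s hs
  exact (diversity_of_length_le a β (ht.trans (le_of_lt hs))).symm

/-- The point `(β, 𝒟_β(·+))` of `J`; the right-continuous diversity function is extended to
negative arguments by its value at `0`. -/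
noncomputable def iotaPoint (ha' : a < 1) (β : IntervalPartition) (hβ : HasDiversityProp a β) :
    JPoint where
  part := β
  f t := Function.rightLim (diversity a β) (max t 0)
  f_nonneg t := (hβ.nonneg ha' _).trans ((hβ.monotone ha').le_rightLim le_rfl)
  f_mono := (hβ.monotone ha').rightLim.comp fun _ _ h => max_le_max_right 0 h
  f_rightCont t := by
    have h1 : ContinuousWithinAt (Function.rightLim (diversity a β)) (Set.Ici (max t 0))
        (max t 0) :=
      continuousWithinAt_rightLim_Ici ((hβ.monotone ha').tendsto_rightLim _)
    have h2 : ContinuousWithinAt (fun s : ℝ => max s 0) (Set.Ici t) t := by fun_prop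
    exact ContinuousWithinAt.comp (f := fun s : ℝ => max s 0) h1 h2
      fun s hs => Set.mem_Ici.2 (max_le_max_right (0 : ℝ) (Set.mem_Ici.1 hs))
  f_const_block p hp s hs t ht := by
    have h0 := (β.blocks_sub p hp).1
    rw [max_eq_left (h0.trans hs.1.le), max_eq_left (h0.trans ht.1.le),
      rightLim_diversity_block a β hp hs, rightLim_diversity_block a β hp ht]
    exact diversity_block a β hp hs ht
  f_const_top t ht := by
    rw [rightLim_diversity_of_length_le a β (le_max_of_le_left ht),
      rightLim_diversity_of_length_le a β (le_max_left _ _)]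
  f_const_neg t ht := by rw [max_eq_right ht, max_self]

theorem iotaPoint_f (ha' : a < 1) (hβ : HasDiversityProp a β) {t : ℝ} (ht : 0 ≤ t) :
    (iotaPoint ha' β hβ).f t = Function.rightLim (diversity a β) t := by
  simp only [iotaPoint, max_eq_left ht]

theorem iotaPoint_f_block (ha' : a < 1) (hβ : HasDiversityProp a β) {p : ℝ × ℝ}
    (hp : p ∈ β.blocks) :
    (iotaPoint ha' β hβ).f ((p.1 + p.2) / 2) = blockDiversity a β p := by
  have h0 := (β.blocks_sub p hp).1
  have h1 := β.blocks_lt p hp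
  rw [iotaPoint_f ha' hβ (by linarith),
    rightLim_diversity_block a β hp ⟨by linarith, by linarith⟩, blockDiversity]

theorem iotaPoint_f_of_length_le (ha' : a < 1) (hβ : HasDiversityProp a β) {t : ℝ}
    (ht : β.length ≤ t) : (iotaPoint ha' β hβ).f t = totalDiversity a β := by
  rw [iotaPoint_f ha' hβ (β.length_nonneg.trans ht), rightLim_diversity_of_length_le a β ht]

theorem dJ_iotaPoint (ha' : a < 1) {γ : IntervalPartition} (hβ : HasDiversityProp a β)
    (hγ : HasDiversityProp a γ) :
    dJ (iotaPoint ha' β hβ) (iotaPoint ha' γ hγ) = dA a β γ := by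
  have key : ∀ n (c : Fin n → (ℝ × ℝ) × (ℝ × ℝ)), IsCorrespondence β γ n c →
      jDistortion (iotaPoint ha' β hβ) (iotaPoint ha' γ hγ) n c = alphaDistortion a β γ n c := by
    intro n c hc
    have h1 : ∀ j, (iotaPoint ha' β hβ).f (((c j).1.1 + (c j).1.2) / 2) =
        blockDiversity a β (c j).1 := fun j => iotaPoint_f_block ha' hβ (hc.1 j).1
    have h2 : ∀ j, (iotaPoint ha' γ hγ).f (((c j).2.1 + (c j).2.2) / 2) =
        blockDiversity a γ (c j).2 := fun j => iotaPoint_f_block ha' hγ (hc.1 j).2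
    have h3 := iotaPoint_f_of_length_le ha' hβ le_rfl
    have h4 := iotaPoint_f_of_length_le ha' hγ le_rfl
    simp only [jDistortion, alphaDistortion, h1, h2]
    rw [← h3, ← h4]
    rfl
  unfold dJ dA
  congr 1
  ext r
  refine exists_congr fun n => exists_congr fun c => ?_
  exact and_congr_right fun hc => by rw [key n c hc]

end Diversity

end IntervalPartition

/-! ### A countable description of the image -/

/-- The filter of positive rational numbers tending to `0`. -/
def ratZero : Filter ℚ := comap (fun q : ℚ => (q : ℝ)) (𝓝[>] (0 : ℝ))

instance : ratZero.IsCountablyGenerated :=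
  inferInstanceAs (comap (fun q : ℚ => (q : ℝ)) (𝓝[>] (0 : ℝ))).IsCountablyGenerated

theorem tendsto_ratZero : Tendsto (fun q : ℚ => (q : ℝ)) ratZero (𝓝[>] (0 : ℝ)) :=
  tendsto_comap

theorem eventually_ratZero {P : ℚ → Prop} :
    (∀ᶠ h in ratZero, P h) ↔ ∃ δ : ℚ, 0 < δ ∧ ∀ h : ℚ, 0 < h → h < δ → P h := by
  constructor
  · intro H
    obtain ⟨s, hs, hsP⟩ := mem_comap.1 H
    obtain ⟨u, hu, hus⟩ := mem_nhdsGT_iff_exists_Ioo_subset.1 hs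
    obtain ⟨δ, h0, hδ⟩ := exists_rat_btwn (Set.mem_Ioi.1 hu)
    refine ⟨δ, by exact_mod_cast h0, fun h hh hhδ => hsP (hus ?_)⟩
    have h1 : (0 : ℝ) < h := by exact_mod_cast hh
    have h2 : (h : ℝ) < δ := by exact_mod_cast hhδ
    exact ⟨h1, h2.trans hδ⟩
  · rintro ⟨δ, hδ, H⟩
    have h1 : Set.Ioo (0 : ℝ) δ ∈ 𝓝[>] (0 : ℝ) := Ioo_mem_nhdsGT (by exact_mod_cast hδ)
    filter_upwards [tendsto_ratZero h1] with h (hh : (h : ℝ) ∈ Set.Ioo (0 : ℝ) δ)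
    exact H h (by exact_mod_cast hh.1) (by exact_mod_cast hh.2)

theorem ratZero_pos : ∀ᶠ h in ratZero, 0 < h :=
  eventually_ratZero.2 ⟨1, one_pos, fun _ hh _ => hh⟩

namespace IntervalPartition

/-- A limit of the rescaled counts along rational thresholds is a limit along all thresholds,
because the counts are right-continuous in the threshold. -/
theorem hasDiversity_of_ratZero {a : ℝ} {β : IntervalPartition} {t d : ℝ}
    (H : Tendsto (fun h : ℚ => scaledCount a β t h) ratZero (𝓝 d)) : HasDiversity a β t d := by
  change Tendsto (scaledCount a β t) _ _
  rw [Metric.tendsto_nhds] at H ⊢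
  intro ε hε
  obtain ⟨δ, hδ, hP⟩ := eventually_ratZero.1 (H (ε / 2) (half_pos hε))
  have h1 : Set.Ioo (0 : ℝ) δ ∈ 𝓝[>] (0 : ℝ) := Ioo_mem_nhdsGT (by exact_mod_cast hδ)
  filter_upwards [h1] with h hh
  have hcont : Tendsto (scaledCount a β t) (𝓝[>] h) (𝓝 (scaledCount a β t h)) := by
    have h2 : ContinuousWithinAt (fun h' : ℝ => Real.Gamma (1 - a) * h' ^ a *
        (divCount β t h : ℝ)) (Set.Ioi h) h := by
      refine ContinuousAt.continuousWithinAt ?_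
      exact (continuousAt_const.mul (Real.continuousAt_rpow_const h a (Or.inl hh.1.ne'))).mul
        continuousAt_const
    refine h2.congr' ?_
    filter_upwards [β.eventually_divCount_eq hh.1 t] with h' h'eq
    rw [scaledCount, h'eq]
  by_contra! hge
  have h3 : ∀ᶠ h' in 𝓝[>] h, ε / 2 < dist (scaledCount a β t h') d :=
    (hcont.dist tendsto_const_nhds).eventually_const_lt (by linarith)
  obtain ⟨u, hu, hus⟩ := mem_nhdsGT_iff_exists_Ioo_subset.1 h3
  obtain ⟨q, hq1, hq2⟩ := exists_rat_btwn (lt_min hu hh.2)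
  rw [lt_min_iff] at hq2
  have h4 : ε / 2 < dist (scaledCount a β t q) d := hus ⟨hq1, hq2.1⟩
  have h5 := hP q (by exact_mod_cast hh.1.trans hq1) (by exact_mod_cast hq2.2)
  exact absurd h4 (not_lt.2 h5.le)

end IntervalPartition

/-- The count of blocks of mass greater than `h` up to the first time `x.f` reaches the level `c`,
as an infimum over rational times (`0` if `c` is not reached). -/
noncomputable def levelCount (x : JPoint) (c h : ℝ) : ℕ :=
  sInf {N | ∃ r : ℚ, 0 ≤ r ∧ c ≤ x.f r ∧ N = divCount x.part r h}

theorem levelCount_le {x : JPoint} {c : ℝ} (h : ℝ) {r : ℚ} (hr0 : 0 ≤ r) (hrc : c ≤ x.f r) :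
    levelCount x c h ≤ divCount x.part r h := by
  refine Nat.sInf_le ?_
  exact ⟨r, hr0, hrc, rfl⟩

theorem levelCount_of_forall_lt {x : JPoint} {c : ℝ} (hx : ∀ r : ℚ, 0 ≤ r → x.f r < c) (h : ℝ) :
    levelCount x c h = 0 := by
  have : {N | ∃ r : ℚ, 0 ≤ r ∧ c ≤ x.f r ∧ N = divCount x.part r h} = ∅ := by
    refine Set.eq_empty_iff_forall_notMem.2 ?_
    rintro _ ⟨r, hr0, hr, _⟩
    exact absurd (hx r hr0) (not_lt.2 hr)
  rw [levelCount, this, Nat.sInf_empty]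

theorem levelCount_eq {x : JPoint} {c T h : ℝ} (hh : 0 < h)
    (hle : ∀ r : ℚ, 0 ≤ r → c ≤ x.f r → T ≤ r)
    (hlt : ∀ s > T, ∃ r : ℚ, 0 ≤ r ∧ c ≤ x.f r ∧ (r : ℝ) < s) :
    levelCount x c h = divCount x.part T h := by
  obtain ⟨s, hsT, hs⟩ := x.part.exists_gt_divCountLt_le hh T
  obtain ⟨r, hr0, hrc, hrs⟩ := hlt s hsT
  refine le_antisymm ?_ ?_
  · exact (levelCount_le h hr0 hrc).trans ((x.part.divCount_le_divCountLt hh hrs).trans hs)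
  · have hne : {N | ∃ r : ℚ, 0 ≤ r ∧ c ≤ x.f r ∧ N = divCount x.part r h}.Nonempty :=
      ⟨_, r, hr0, hrc, rfl⟩
    obtain ⟨r', hr'0, hr'c, hr'⟩ := Nat.sInf_mem hne
    rw [levelCount, hr']
    exact x.part.divCount_mono hh (hle r' hr'0 hr'c)

/-- Countably many conditions cutting out the image: the rescaled counts at rational times are
asymptotically sandwiched between values of `f`, and they converge at the first passage times of
`f` through rational levels, among which are all jump times of `f`. -/
def ImageCond (a : ℝ) (x : JPoint) : Prop :=
  (∀ s t ε : ℚ, 0 ≤ s → s < t → 0 < ε → ∃ δ : ℚ, 0 < δ ∧ ∀ h : ℚ, 0 < h → h < δ →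
    x.f s - ε ≤ scaledCount a x.part t h ∧ scaledCount a x.part t h ≤ x.f t + ε) ∧
  ∀ c : ℚ, ∃ d, Tendsto (fun h : ℚ => Real.Gamma (1 - a) * (h : ℝ) ^ a * (levelCount x c h : ℝ))
    ratZero (𝓝 d)

theorem imageCond_iotaPoint {a : ℝ} (ha' : a < 1) {β : IntervalPartition}
    (hβ : HasDiversityProp a β) : ImageCond a (iotaPoint ha' β hβ) := by
  set x := iotaPoint ha' β hβ with hx
  have hmono := hβ.monotone ha'
  constructor
  · intro s t ε hs hst hε
    have hε' : (0 : ℝ) < ε := by exact_mod_cast hε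
    have hs' : (0 : ℝ) ≤ s := by exact_mod_cast hs
    have hst' : (s : ℝ) < t := by exact_mod_cast hst
    have h1 : x.f s ≤ diversity a β t := by
      rw [hx, iotaPoint_f ha' hβ hs']
      exact hmono.rightLim_le hst'
    have h2 : diversity a β t ≤ x.f t := by
      rw [hx, iotaPoint_f ha' hβ (hs'.trans hst'.le)]
      exact hmono.le_rightLim le_rfl
    have h3 : Tendsto (fun h : ℚ => scaledCount a β t h) ratZero (𝓝 (diversity a β t)) :=
      (hβ.hasDiversity t).comp tendsto_ratZero
    refine eventually_ratZero.1 ?_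
    filter_upwards [h3.eventually_const_lt (sub_lt_self _ hε'),
      h3.eventually_lt_const (lt_add_of_pos_right _ hε')] with h h4 h5
    change _ ≤ scaledCount a β t h ∧ scaledCount a β t h ≤ _
    exact ⟨by linarith, by linarith⟩
  · intro c
    by_cases hc : ∃ r : ℚ, 0 ≤ r ∧ (c : ℝ) ≤ x.f r
    · obtain ⟨r₀, hr₀, hr₀c⟩ := hc
      set T := sInf {t : ℝ | 0 ≤ t ∧ c ≤ x.f t} with hT
      have hbdd : BddBelow {t : ℝ | 0 ≤ t ∧ c ≤ x.f t} := ⟨0, fun t ht => ht.1⟩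
      refine ⟨diversity a β T, ((hβ.hasDiversity T).comp tendsto_ratZero).congr' ?_⟩
      filter_upwards [ratZero_pos] with h hh
      rw [levelCount_eq (T := T) (by exact_mod_cast hh)]
      · rfl
      · exact fun r hr hrc => csInf_le hbdd ⟨by exact_mod_cast hr, hrc⟩
      · intro s hs
        obtain ⟨t, ⟨ht0, htc⟩, hts⟩ := exists_lt_of_csInf_lt
          (s := {t : ℝ | 0 ≤ t ∧ c ≤ x.f t}) ⟨r₀, by exact_mod_cast hr₀, hr₀c⟩ hs
        obtain ⟨q, hq1, hq2⟩ := exists_rat_btwn hts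
        exact ⟨q, by exact_mod_cast ht0.trans hq1.le, htc.trans (x.f_mono hq1.le), hq2⟩
    · push Not at hc
      refine ⟨0, ?_⟩
      simp only [levelCount_of_forall_lt hc, Nat.cast_zero, mul_zero]
      exact tendsto_const_nhds

/-- At a time not jumped over by `f` the sandwich forces convergence, and a jump time is the first
passage time of `f` through any rational level in the jump. -/
theorem ImageCond.hasDiversityProp {a : ℝ} (ha' : a < 1) {x : JPoint} (hx : ImageCond a x) :
    HasDiversityProp a x.part := by
  rintro t ⟨ht0, -⟩
  rcases ht0.eq_or_lt with rfl | ht0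
  · refine ⟨0, ?_⟩
    simp only [HasDiversity, x.part.divCount_of_nonpos le_rfl, Nat.cast_zero, mul_zero]
    exact tendsto_const_nhds
  by_cases hleft : ∀ c < x.f t, ∃ s, 0 ≤ s ∧ s < t ∧ c < x.f s
  · refine ⟨x.f t, hasDiversity_of_ratZero (tendsto_order.2 ⟨fun c hc => ?_, fun c hc => ?_⟩)⟩
    · obtain ⟨s, hs0, hst, hcs⟩ := hleft c hc
      obtain ⟨q₁, hq₁s, hq₁t⟩ := exists_rat_btwn hst
      obtain ⟨q₂, hq₁₂, hq₂t⟩ := exists_rat_btwn hq₁t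
      obtain ⟨ε, hε0, hε⟩ := exists_rat_btwn (sub_pos.2 hcs)
      have h1 := eventually_ratZero.2 (hx.1 q₁ q₂ ε (by exact_mod_cast hs0.trans hq₁s.le)
        (by exact_mod_cast hq₁₂) (by exact_mod_cast hε0))
      filter_upwards [h1, ratZero_pos] with h h2 hh
      have h3 := scaledCount_mono (a := a) (β := x.part) ha' (h := h) (by exact_mod_cast hh)
        hq₂t.le
      have h4 := x.f_mono hq₁s.le
      linarith [h2.1]
    · obtain ⟨u, htu, hu⟩ : ∃ u > t, x.f u < c := by
        have h1 := (x.f_rightCont t).mono Set.Ioi_subset_Ici_self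
        obtain ⟨u, hu, hut⟩ := ((h1.eventually_lt_const hc).and self_mem_nhdsWithin).exists
        exact ⟨u, hut, hu⟩
      obtain ⟨q, htq, hqu⟩ := exists_rat_btwn htu
      obtain ⟨ε, hε0, hε⟩ := exists_rat_btwn (sub_pos.2 hu)
      have h1 := eventually_ratZero.2 (hx.1 0 q ε le_rfl (by exact_mod_cast ht0.trans htq)
        (by exact_mod_cast hε0))
      filter_upwards [h1, ratZero_pos] with h h2 hh
      have h3 := scaledCount_mono (a := a) (β := x.part) ha' (h := h) (by exact_mod_cast hh)
        htq.le
      have h4 := x.f_mono hqu.le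
      linarith [h2.2]
  · push Not at hleft
    obtain ⟨c₀, hc₀, hleft⟩ := hleft
    obtain ⟨c, hc1, hc2⟩ := exists_rat_btwn hc₀
    obtain ⟨d, hd⟩ := hx.2 c
    refine ⟨d, hasDiversity_of_ratZero (hd.congr' ?_)⟩
    filter_upwards [ratZero_pos] with h hh
    rw [levelCount_eq (T := t) (by exact_mod_cast hh)]
    · rfl
    · intro r hr hrc
      by_contra! hrt
      have := hleft r (by exact_mod_cast hr) hrt
      linarith
    · intro s hs
      obtain ⟨q, hq1, hq2⟩ := exists_rat_btwn hs
      exact ⟨q, by exact_mod_cast ht0.le.trans hq1.le, hc2.le.trans (x.f_mono hq1.le), hq2⟩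

/-- The sandwich identifies `f` with the right-continuous diversity function. -/
theorem ImageCond.tendsto_diversity {a : ℝ} (ha' : a < 1) {x : JPoint} (hx : ImageCond a x)
    {t : ℝ} (ht : 0 ≤ t) : Tendsto (diversity a x.part) (𝓝[>] t) (𝓝 (x.f t)) := by
  have hβ := hx.hasDiversityProp ha'
  have hmono := hβ.monotone ha'
  have hrat : ∀ s q : ℚ, 0 ≤ s → s < q →
      x.f s ≤ diversity a x.part q ∧ diversity a x.part q ≤ x.f q := by
    intro s q hs hsq
    have h1 : ¬ ratZero = ⊥ := by
      intro hbot
      have hF : ∀ᶠ _ in ratZero, False := by rw [hbot]; exact eventually_bot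
      obtain ⟨δ, hδ, hf⟩ := eventually_ratZero.1 hF
      exact hf (δ / 2) (half_pos hδ) (half_lt_self hδ)
    have : ratZero.NeBot := ⟨h1⟩
    have h2 := (hβ.hasDiversity q).comp tendsto_ratZero
    constructor
    · refine le_of_forall_pos_le_add fun ε hε => ?_
      obtain ⟨e, he0, he⟩ := exists_rat_btwn hε
      have h3 := eventually_ratZero.2 (hx.1 s q e hs hsq (by exact_mod_cast he0))
      have := ge_of_tendsto h2 (h3.mono fun h hh => hh.1)
      linarith
    · refine le_of_forall_pos_le_add fun ε hε => ?_
      obtain ⟨e, he0, he⟩ := exists_rat_btwn hε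
      have h3 := eventually_ratZero.2 (hx.1 s q e hs hsq (by exact_mod_cast he0))
      have := le_of_tendsto h2 (h3.mono fun h hh => hh.2)
      linarith
  have hright : ∀ s, ContinuousWithinAt x.f (Set.Ioi s) s := fun s =>
    (x.f_rightCont s).mono Set.Ioi_subset_Ici_self
  refine tendsto_of_tendsto_of_tendsto_of_le_of_le' tendsto_const_nhds (hright t) ?_ ?_
  · filter_upwards [self_mem_nhdsWithin] with u hu
    obtain ⟨q₁, h1, h2⟩ := exists_rat_btwn (Set.mem_Ioi.1 hu)
    obtain ⟨q₂, h3, h4⟩ := exists_rat_btwn h2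
    exact (x.f_mono h1.le).trans ((hrat q₁ q₂ (by exact_mod_cast ht.trans h1.le)
      (by exact_mod_cast h3)).1.trans (hmono h4.le))
  · filter_upwards [self_mem_nhdsWithin] with u hu
    have hu0 : 0 < u := ht.trans_lt hu
    refine ge_of_tendsto (hright u) ?_
    filter_upwards [self_mem_nhdsWithin] with v hv
    obtain ⟨q, h1, h2⟩ := exists_rat_btwn (Set.mem_Ioi.1 hv)
    exact (hmono h1.le).trans ((hrat 0 q le_rfl (by exact_mod_cast hu0.trans h1)).2.trans
      (x.f_mono h2.le))

theorem ImageCond.eq_iotaPoint {a : ℝ} (ha' : a < 1) {x : JPoint} (hx : ImageCond a x) :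
    iotaPoint ha' x.part (hx.hasDiversityProp ha') = x := by
  have hf : (iotaPoint ha' x.part (hx.hasDiversityProp ha')).f = x.f := by
    have hpos : ∀ t, 0 ≤ t → (iotaPoint ha' x.part (hx.hasDiversityProp ha')).f t = x.f t := by
      intro t ht
      rw [iotaPoint_f ha' _ ht]
      exact rightLim_eq_of_tendsto (hx.tendsto_diversity ha' ht)
    funext t
    rcases le_total 0 t with ht | ht
    · exact hpos t ht
    · rw [JPoint.f_const_neg _ t ht, x.f_const_neg t ht, hpos 0 le_rfl]
  have hpart : (iotaPoint ha' x.part (hx.hasDiversityProp ha')).part = x.part := rfl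
  generalize iotaPoint ha' x.part (hx.hasDiversityProp ha') = y at hf hpart
  cases x
  cases y
  simp only at hf hpart
  subst hf hpart
  rfl

/-! ### Borel measurability -/

theorem measurable_f (t : ℝ) : @Measurable JPoint ℝ (@borel JPoint jTop) _ fun x => x.f t := by
  let _ := jTop
  let _ : MeasurableSpace JPoint := borel JPoint
  have : BorelSpace JPoint := ⟨rfl⟩
  exact measurable_of_Iio fun c => (isOpen_f_lt t c).measurableSet

theorem measurable_divCount (t : ℝ) {h : ℝ} (hh : 0 < h) :
    @Measurable JPoint ℕ (@borel JPoint jTop) _ fun x => divCount x.part t h := by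
  let _ := jTop
  let _ : MeasurableSpace JPoint := borel JPoint
  have : BorelSpace JPoint := ⟨rfl⟩
  refine measurable_of_Ici fun k => ?_
  -- By right-continuity, `divCount` at `t` is the infimum of `divCountLt` at rational `s > t`.
  have heq : (fun x : JPoint => divCount x.part t h) ⁻¹' Set.Ici k =
      ⋂ (s : ℚ) (_ : t < s), {x : JPoint | k ≤ divCountLt x.part s h} := by
    ext x
    simp only [Set.mem_preimage, Set.mem_Ici, Set.mem_iInter, Set.mem_ofPred_eq]
    constructor
    · exact fun hk s hs => hk.trans (x.part.divCount_le_divCountLt hh hs)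
    · intro H
      obtain ⟨s, hs, hle⟩ := x.part.exists_gt_divCountLt_le hh t
      obtain ⟨q, hq1, hq2⟩ := exists_rat_btwn hs
      exact (H q hq1).trans ((x.part.divCountLt_le_divCount hh q).trans
        ((x.part.divCount_le_divCountLt hh hq2).trans hle))
  rw [heq]
  exact .iInter fun s => .iInter fun _ => (isOpen_le_divCountLt s hh k).measurableSet

theorem measurable_levelCount (c : ℝ) {h : ℝ} (hh : 0 < h) :
    @Measurable JPoint ℕ (@borel JPoint jTop) _ fun x => levelCount x c h := by
  let _ := jTop
  let _ : MeasurableSpace JPoint := borel JPoint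
  refine measurable_of_Iic fun k => ?_
  have heq : (fun x : JPoint => levelCount x c h) ⁻¹' Set.Iic k =
      (⋂ (r : ℚ) (_ : 0 ≤ r), {x : JPoint | x.f r < c}) ∪
      ⋃ (r : ℚ) (_ : 0 ≤ r), {x : JPoint | c ≤ x.f r} ∩ {x | divCount x.part r h ≤ k} := by
    ext x
    simp only [Set.mem_preimage, Set.mem_Iic, Set.mem_union, Set.mem_iInter, Set.mem_iUnion,
      Set.mem_inter_iff, Set.mem_ofPred_eq, exists_prop]
    constructor
    · intro hk
      by_cases hc : ∃ r : ℚ, 0 ≤ r ∧ c ≤ x.f r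
      · obtain ⟨r, hr0, hrc⟩ := hc
        have hne : {N | ∃ r : ℚ, 0 ≤ r ∧ c ≤ x.f r ∧ N = divCount x.part r h}.Nonempty :=
          ⟨_, r, hr0, hrc, rfl⟩
        obtain ⟨r', hr'0, hr'c, hr'⟩ := Nat.sInf_mem hne
        exact Or.inr ⟨r', hr'0, hr'c, hr' ▸ hk⟩
      · push Not at hc
        exact Or.inl hc
    · rintro (hc | ⟨r, hr0, hrc, hrk⟩)
      · rw [levelCount_of_forall_lt hc]
        exact Nat.zero_le k
      · exact (levelCount_le h hr0 hrc).trans hrk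
  rw [heq]
  refine .union (.iInter fun r => .iInter fun _ => ?_) (.iUnion fun r => .iUnion fun _ => ?_)
  · exact measurableSet_lt (measurable_f r) measurable_const
  · exact (measurableSet_le measurable_const (measurable_f r)).inter
      (measurableSet_le (measurable_divCount r hh) measurable_const)

theorem measurableSet_imageCond (a : ℝ) :
    @MeasurableSet JPoint (@borel JPoint jTop) {x | ImageCond a x} := by
  let _ := jTop
  let _ : MeasurableSpace JPoint := borel JPoint
  have hcast : Measurable fun n : ℕ => (n : ℝ) := measurable_from_top
  refine MeasurableSet.inter
    (s₁ := {x : JPoint | ∀ s t ε : ℚ, 0 ≤ s → s < t → 0 < ε → ∃ δ : ℚ, 0 < δ ∧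
      ∀ h : ℚ, 0 < h → h < δ → x.f s - ε ≤ scaledCount a x.part t h ∧
        scaledCount a x.part t h ≤ x.f t + ε})
    (s₂ := {x : JPoint | ∀ c : ℚ, ∃ d, Tendsto (fun h : ℚ => Real.Gamma (1 - a) * (h : ℝ) ^ a *
      (levelCount x c h : ℝ)) ratZero (𝓝 d)}) ?_ ?_
  · simp only [Set.ofPred_forall, Set.ofPred_exists, Set.ofPred_and]
    refine .iInter fun s => .iInter fun t => .iInter fun ε => .iInter fun _ => .iInter fun _ =>
      .iInter fun _ => .iUnion fun δ => .inter (.const _) (.iInter fun h => .iInter fun hh =>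
      .iInter fun _ => ?_)
    have hN : Measurable fun x : JPoint => scaledCount a x.part t h :=
      (hcast.comp (measurable_divCount t (by exact_mod_cast hh))).const_mul _
    exact (measurableSet_le ((measurable_f s).sub_const _) hN).inter
      (measurableSet_le hN ((measurable_f t).add_const _))
  · rw [Set.ofPred_forall]
    refine .iInter fun c => ?_
    -- Nonpositive thresholds are irrelevant to the limit and are cut off.
    have hM : ∀ h : ℚ, Measurable fun x : JPoint => if 0 < h then
        Real.Gamma (1 - a) * (h : ℝ) ^ a * (levelCount x c h : ℝ) else 0 := by
      intro h
      split_ifs with hh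
      · exact (hcast.comp (measurable_levelCount c (by exact_mod_cast hh))).const_mul _
      · exact measurable_const
    convert measurableSet_exists_tendsto (l := ratZero) hM using 1
    ext x
    refine exists_congr fun d => tendsto_congr' ?_
    filter_upwards [ratZero_pos] with h hh
    rw [if_pos hh]

open IntervalPartition in
/-- the map `ι(η) = (η, 𝒟_η(·+))`, pairing `η ∈ I_α` with the
right-continuous modification of its diversity function (constant on
`[‖η‖, ∞]`), is an isometric embedding of `(I_α, d_α)` into `(J, d_J)` with
Borel image; consequently `(I_α, d_α)` is isometric to a Borel subset of the
complete separable metric space `(J, d_J)`, i.e. it is Lusin. -/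
theorem iota_isometric_borel (a : ℝ) (ha : 0 < a) (ha' : a < 1) :
    ∃ ι : {β : IntervalPartition // HasDiversityProp a β} → JPoint,
      (∀ η, (ι η).part = η.val) ∧
      (∀ η, ∀ t : ℝ, 0 ≤ t → t < η.val.length →
        Tendsto (diversity a η.val) (𝓝[>] t) (𝓝 ((ι η).f t))) ∧
      (∀ η, ∀ t : ℝ, η.val.length ≤ t → (ι η).f t = totalDiversity a η.val) ∧
      Function.Injective ι ∧
      (∀ η ζ, dJ (ι η) (ι ζ) = dA a η.val ζ.val) ∧
      @MeasurableSet JPoint (@borel JPoint jTop) (Set.range ι) := by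
  refine ⟨fun η => iotaPoint ha' η.val η.property, fun _ => rfl, fun η t ht _ => ?_,
    fun η t ht => iotaPoint_f_of_length_le ha' η.property ht,
    fun η ζ h => Subtype.ext (congrArg JPoint.part h),
    fun η ζ => dJ_iotaPoint ha' η.property ζ.property, ?_⟩
  · rw [iotaPoint_f ha' η.property ht]
    exact (η.property.monotone ha').tendsto_rightLim t
  · have heq : Set.range (fun η : {β : IntervalPartition // HasDiversityProp a β} =>
        iotaPoint ha' η.val η.property) = {x | ImageCond a x} := by
      ext x
      constructor
      · rintro ⟨η, rfl⟩
        exact imageCond_iotaPoint ha' η.property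
      · exact fun hx => ⟨⟨x.part, hx.hasDiversityProp ha'⟩, hx.eq_iotaPoint ha'⟩
    rw [heq]
    exact measurableSet_imageCond a
end

section
/- On I_α, the three metrics d_α, d_H, and d_H' generate the same Borel σ-algebra (even though the topology of d_α is strictly stronger than that of d_H and d_H'). -/
/-!
The identity map is continuous from `d_α` to `d_H'` to `d_H`, since `d_H' ≤ d_α` (`dHp_le_dA`) and
`d_H ≤ 2 d_H'` (`dH_le_dHp`), so `borel d_H ≤ borel d_H' ≤ borel d_α`. It remains to show that
`borel d_α ≤ borel d_H`.

Both `d_α` and `d_H'` are instances of a pseudometric `dG D T`, with `D` and `T` the block diversity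
and total diversity, or zero. The triangle inequality `dG_triangle` comes from composing matchings,
and the topology is second countable (`secondCountable_topOfDist`): finitely many blocks carry
almost all the mass, and only countably many rounded lists of their masses and diversities occur.
Therefore the Borel σ-algebra of `d_α` is generated by its balls.

Each ball `{y | d_α(x, y) < r}` is Borel for `d_H`. Indeed, the event that one block of `y` contains
both `p` and `q`, and the event that the length of `y` exceeds `c`, are `d_H`-open (`isOpen_spans`,
`isOpen_length_gt`). Hence the endpoints of the block of `y` around a rational are measurable
functions of `y`. The number of blocks of mass above `h` ending before `t` can be read off from
rational representatives, so it is measurable, and the diversity, a limit of such counts, is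
measurable too. A correspondence between `x` and `y` amounts to finitely many pairs of a block of `x`
and a rational naming a block of `y`; there are countably many such choices, so the ball is a
countable union of measurable events (`exists_close_iff`, `measurableSet_ball`).
-/

open MeasureTheory Filter Topology Set

/-- `I_α` as a type: interval partitions with the `a`-diversity property. -/
def Ia (a : ℝ) : Type := {β : IntervalPartition // IntervalPartition.HasDiversityProp a β}

/-- The topology on `I_α` generated by the open balls of a distance function
`d` (the metric topology when `d` is a metric). -/
noncomputable def topOfDist (a : ℝ) (d : Ia a → Ia a → ℝ) : TopologicalSpace (Ia a) :=
  TopologicalSpace.generateFrom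
    {s : Set (Ia a) | ∃ x : Ia a, ∃ r : ℝ, s = {y | d x y < r}}


namespace SameBorel

open IntervalPartition

/-! ### Correspondences as finite sets -/

/-- A correspondence encoded as a finite set of pairs of blocks, any two of which are ordered
in the same way in both coordinates. -/
def IsMatching (β γ : IntervalPartition) (s : Finset ((ℝ × ℝ) × (ℝ × ℝ))) : Prop :=
  (∀ e ∈ s, e.1 ∈ β.blocks ∧ e.2 ∈ γ.blocks) ∧
  ∀ e ∈ s, ∀ e' ∈ s, e ≠ e' → (e.1.2 ≤ e'.1.1 ∧ e.2.2 ≤ e'.2.1) ∨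
    (e'.1.2 ≤ e.1.1 ∧ e'.2.2 ≤ e.2.1)

/-- The matching `s` has distortion at most `δ`, where `D` and `T` are arbitrary substitutes for
the block diversity and the total diversity. -/
structure Close (D : IntervalPartition → ℝ × ℝ → ℝ) (T : IntervalPartition → ℝ)
    (β γ : IntervalPartition) (s : Finset ((ℝ × ℝ) × (ℝ × ℝ))) (δ : ℝ) : Prop where
  matching : IsMatching β γ s
  left : (∑ e ∈ s, |mass e.1 - mass e.2|) + β.length - ∑ e ∈ s, mass e.1 ≤ δ
  right : (∑ e ∈ s, |mass e.1 - mass e.2|) + γ.length - ∑ e ∈ s, mass e.2 ≤ δ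
  div : ∀ e ∈ s, |D β e.1 - D γ e.2| ≤ δ
  tot : |T β - T γ| ≤ δ

/-- The common generalization of `d_α` and `d_H'`: the infimum of the distortions relative to
`D` and `T`. -/
noncomputable def dG (D : IntervalPartition → ℝ × ℝ → ℝ) (T : IntervalPartition → ℝ)
    (β γ : IntervalPartition) : ℝ :=
  sInf {δ | ∃ s, Close D T β γ s δ}

/-! ### Blocks and their masses -/

lemma sum_mass_le (β : IntervalPartition) (F : Finset (ℝ × ℝ)) (hF : ∀ p ∈ F, p ∈ β.blocks)
    (x y : ℝ) (hxy : x ≤ y) (h : ∀ p ∈ F, x ≤ p.1 ∧ p.2 ≤ y) :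
    ∑ p ∈ F, mass p ≤ y - x := by
  have h1 : volume (⋃ p ∈ F, Ioo p.1 p.2) = ∑ p ∈ F, volume (Ioo p.1 p.2) := by
    apply measure_biUnion_finset
    · intro p hp q hq hpq
      exact Set.disjoint_iff_inter_eq_empty.2 (β.blocks_disjoint p (hF p hp) q (hF q hq) hpq)
    · intro p _
      exact measurableSet_Ioo
  have h2 : volume (⋃ p ∈ F, Ioo p.1 p.2) ≤ volume (Icc x y) := by
    apply measure_mono
    intro z hz
    simp only [mem_iUnion] at hz
    obtain ⟨p, hp, hz⟩ := hz
    exact ⟨(h p hp).1.trans hz.1.le, hz.2.le.trans (h p hp).2⟩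
  rw [h1, Real.volume_Icc] at h2
  simp only [Real.volume_Ioo] at h2
  rw [← ENNReal.ofReal_sum_of_nonneg] at h2
  · exact (ENNReal.ofReal_le_ofReal_iff (by linarith)).1 h2
  · intro p hp
    linarith [β.blocks_lt p (hF p hp)]

lemma mass_pos {β : IntervalPartition} {p : ℝ × ℝ} (hp : p ∈ β.blocks) : 0 < mass p :=
  sub_pos.2 (β.blocks_lt p hp)

/-- A point belongs to at most one block. -/
lemma block_unique {β : IntervalPartition} {p q : ℝ × ℝ} (hp : p ∈ β.blocks) (hq : q ∈ β.blocks)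
    {t : ℝ} (h1 : t ∈ Ioo p.1 p.2) (h2 : t ∈ Ioo q.1 q.2) : p = q := by
  by_contra h
  have := β.blocks_disjoint p hp q hq h
  exact Set.notMem_empty t (this ▸ ⟨h1, h2⟩)

lemma right_notMem_block {β : IntervalPartition} {p q : ℝ × ℝ} (hp : p ∈ β.blocks)
    (hq : q ∈ β.blocks) : p.2 ∉ Ioo q.1 q.2 := by
  intro h
  have hlt := β.blocks_lt p hp
  have hm : max p.1 q.1 < p.2 := max_lt hlt h.1
  obtain ⟨z, hz1, hz2⟩ := exists_between hm
  have := block_unique hp hq (t := z) ⟨(le_max_left _ _).trans_lt hz1, hz2⟩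
    ⟨(le_max_right _ _).trans_lt hz1, hz2.trans h.2⟩
  subst this
  exact lt_irrefl _ h.2

lemma right_mem_cset {β : IntervalPartition} {p : ℝ × ℝ} (hp : p ∈ β.blocks) :
    p.2 ∈ β.cset := by
  refine ⟨⟨?_, (β.blocks_sub p hp).2⟩, ?_⟩
  · linarith [(β.blocks_sub p hp).1, β.blocks_lt p hp]
  · simp only [mem_iUnion, not_exists]
    intro q hq
    exact right_notMem_block hp hq

lemma zero_mem_cset (β : IntervalPartition) : (0 : ℝ) ∈ β.cset := by
  refine ⟨⟨le_rfl, β.length_nonneg⟩, ?_⟩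
  simp only [mem_iUnion, not_exists]
  intro q hq h
  linarith [(β.blocks_sub q hq).1, h.1]

lemma length_mem_cset (β : IntervalPartition) : β.length ∈ β.cset := by
  refine ⟨⟨β.length_nonneg, le_rfl⟩, ?_⟩
  simp only [mem_iUnion, not_exists]
  intro q hq h
  linarith [(β.blocks_sub q hq).2, h.2]

lemma block_order {β : IntervalPartition} {p q : ℝ × ℝ} (hp : p ∈ β.blocks) (hq : q ∈ β.blocks)
    (h : p.1 < q.1) : p.2 ≤ q.1 := by
  by_contra! hc
  have h1 := β.blocks_lt q hq
  obtain ⟨z, hz1, hz2⟩ := exists_between (lt_min hc h1)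
  have := block_unique hp hq (t := z) ⟨h.trans hz1, hz2.trans_le (min_le_left _ _)⟩
    ⟨hz1, hz2.trans_le (min_le_right _ _)⟩
  subst this
  exact lt_irrefl _ h

lemma block_eq_of_left {β : IntervalPartition} {p q : ℝ × ℝ} (hp : p ∈ β.blocks)
    (hq : q ∈ β.blocks) (h : p.1 = q.1) : p = q := by
  have h1 := β.blocks_lt q hq
  have h2 := β.blocks_lt p hp
  obtain ⟨z, hz1, hz2⟩ := exists_between (lt_min (h ▸ h2) h1)
  exact block_unique hp hq (t := z) ⟨h ▸ hz1, hz2.trans_le (min_le_left _ _)⟩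
    ⟨hz1, hz2.trans_le (min_le_right _ _)⟩

lemma countable_blocks (β : IntervalPartition) : β.blocks.Countable := by
  refine Set.PairwiseDisjoint.countable_of_isOpen (s := fun p : ℝ × ℝ => Ioo p.1 p.2) ?_ ?_ ?_
  · intro p hp q hq hpq
    exact Set.disjoint_iff_inter_eq_empty.2 (β.blocks_disjoint p hp q hq hpq)
  · intro p _
    exact isOpen_Ioo
  · intro p hp
    exact nonempty_Ioo.2 (β.blocks_lt p hp)

/-- Finitely many blocks exhaust the mass up to `ε`; this is where the nullity of the complement
enters. -/
lemma exists_finset_blocks (β : IntervalPartition) {ε : ℝ} (hε : 0 < ε) :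
    ∃ F : Finset (ℝ × ℝ), (∀ p ∈ F, p ∈ β.blocks) ∧ β.length - ∑ p ∈ F, mass p ≤ ε := by
  by_contra! hcon
  have hU : volume (⋃ p ∈ β.blocks, Ioo p.1 p.2) = ∑' p : β.blocks, volume (Ioo p.1.1 p.1.2) := by
    apply measure_biUnion (countable_blocks β)
    · intro p hp q hq hpq
      exact Set.disjoint_iff_inter_eq_empty.2 (β.blocks_disjoint p hp q hq hpq)
    · intro p _
      exact measurableSet_Ioo
  have hle : volume (Icc 0 β.length) ≤ volume (⋃ p ∈ β.blocks, Ioo p.1 p.2) := by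
    calc volume (Icc 0 β.length)
        ≤ volume ((Icc 0 β.length \ ⋃ p ∈ β.blocks, Ioo p.1 p.2)
            ∪ ⋃ p ∈ β.blocks, Ioo p.1 p.2) := measure_mono (by
              intro z hz
              by_cases h : z ∈ ⋃ p ∈ β.blocks, Ioo p.1 p.2
              · exact Or.inr h
              · exact Or.inl ⟨hz, h⟩)
      _ ≤ _ := measure_union_le _ _
      _ = _ := by rw [β.compl_null, zero_add]
  rw [hU, Real.volume_Icc, sub_zero] at hle
  have h3 : ∑' p : β.blocks, volume (Ioo p.1.1 p.1.2) ≤ ENNReal.ofReal (β.length - ε) := by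
    rw [ENNReal.tsum_eq_iSup_sum]
    apply iSup_le
    intro F
    simp only [Real.volume_Ioo]
    rw [← ENNReal.ofReal_sum_of_nonneg]
    · apply ENNReal.ofReal_le_ofReal
      have := hcon (F.map (Function.Embedding.subtype _)) (by
        intro p hp
        simp only [Finset.mem_map, Function.Embedding.subtype_apply] at hp
        obtain ⟨q, _, rfl⟩ := hp
        exact q.2)
      rw [Finset.sum_map] at this
      simp only [Function.Embedding.subtype_apply, mass] at this
      linarith
    · intro p _
      linarith [β.blocks_lt p.1 p.2]
  have h4 := hcon ∅ (by simp)
  simp only [Finset.sum_empty, sub_zero] at h4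
  have h5 := (ENNReal.ofReal_le_ofReal_iff (by linarith)).1 (hle.trans h3)
  linarith

/-- A finite set can be enumerated increasingly with respect to a key that is injective on it. -/
lemma exists_enum {ι : Type*} (s : Finset ι) (g : ι → ℝ) (hg : Set.InjOn g s) :
    ∃ c : Fin s.card → ι, (∀ j, c j ∈ s) ∧ (∀ j k, j < k → g (c j) < g (c k)) ∧
      ∀ f : ι → ℝ, ∑ j, f (c j) = ∑ e ∈ s, f e := by
  classical
  have hcard : (s.image g).card = s.card := Finset.card_image_of_injOn hg
  let o := (s.image g).orderEmbOfFin hcard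
  have hmem : ∀ j, ∃ e ∈ s, g e = o j := by
    intro j
    have := (s.image g).orderEmbOfFin_mem hcard j
    simpa using Finset.mem_image.1 this
  choose c hc1 hc2 using hmem
  have hmono : ∀ j k, j < k → g (c j) < g (c k) := by
    intro j k hjk
    rw [hc2, hc2]
    exact o.strictMono hjk
  have hinj : Function.Injective c := by
    intro j k hjk
    by_contra hne
    rcases lt_or_gt_of_ne hne with h | h
    · exact (hmono _ _ h).ne (by rw [hjk])
    · exact (hmono _ _ h).ne (by rw [hjk])
  refine ⟨c, hc1, hmono, ?_⟩
  intro f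
  have him : Finset.univ.image c = s := by
    apply Finset.eq_of_subset_of_card_le
    · intro e he
      obtain ⟨j, _, rfl⟩ := Finset.mem_image.1 he
      exact hc1 j
    · rw [Finset.card_image_of_injective _ hinj]
      simp
  have hsum := Finset.sum_image (f := f) (s := Finset.univ) (g := c) hinj.injOn
  rw [him] at hsum
  exact hsum.symm

lemma exists_seq_blocks (β : IntervalPartition) {ε : ℝ} (hε : 0 < ε) :
    ∃ n : ℕ, ∃ c : Fin n → ℝ × ℝ, (∀ j, c j ∈ β.blocks) ∧ (∀ j k, j < k → (c j).2 ≤ (c k).1) ∧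
      β.length - ∑ j, mass (c j) ≤ ε := by
  obtain ⟨F, hF, hs⟩ := exists_finset_blocks β hε
  obtain ⟨c, h1, h2, h3⟩ := exists_enum F (fun p => p.1) (by
    intro p hp q hq h
    exact block_eq_of_left (hF p hp) (hF q hq) h)
  refine ⟨_, c, fun j => hF _ (h1 j), fun j k hjk =>
    block_order (hF _ (h1 j)) (hF _ (h1 k)) (h2 j k hjk), ?_⟩
  rw [h3 mass]
  exact hs

/-! ### Matchings -/

lemma IsMatching.symm {β γ : IntervalPartition} {s : Finset ((ℝ × ℝ) × (ℝ × ℝ))}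
    (h : IsMatching β γ s) : IsMatching γ β (s.image Prod.swap) := by
  refine ⟨?_, ?_⟩
  · intro e he
    obtain ⟨e₀, he₀, rfl⟩ := Finset.mem_image.1 he
    exact (h.1 e₀ he₀).symm
  · intro e he e' he' hne
    obtain ⟨e₀, he₀, rfl⟩ := Finset.mem_image.1 he
    obtain ⟨e₁, he₁, rfl⟩ := Finset.mem_image.1 he'
    have := h.2 e₀ he₀ e₁ he₁ (fun h => hne (by rw [h]))
    simp only [Prod.fst_swap, Prod.snd_swap]
    tauto

lemma IsMatching.inj_fst {β γ : IntervalPartition} {s : Finset ((ℝ × ℝ) × (ℝ × ℝ))}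
    (h : IsMatching β γ s) {e e' : (ℝ × ℝ) × (ℝ × ℝ)} (he : e ∈ s) (he' : e' ∈ s)
    (heq : e.1 = e'.1) : e = e' := by
  by_contra hne
  have h1 := β.blocks_lt _ (h.1 e he).1
  have h2 := β.blocks_lt _ (h.1 e' he').1
  rcases h.2 e he e' he' hne with h3 | h3
  · rw [heq] at h3
    linarith [h3.1]
  · rw [heq] at h3
    linarith [h3.1]

lemma IsMatching.inj_snd {β γ : IntervalPartition} {s : Finset ((ℝ × ℝ) × (ℝ × ℝ))}
    (h : IsMatching β γ s) {e e' : (ℝ × ℝ) × (ℝ × ℝ)} (he : e ∈ s) (he' : e' ∈ s)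
    (heq : e.2 = e'.2) : e = e' :=
  Prod.swap_injective (h.symm.inj_fst (Finset.mem_image_of_mem _ he)
    (Finset.mem_image_of_mem _ he') (by simpa using heq))

lemma IsMatching.sum_fst_le {β γ : IntervalPartition} {s s' : Finset ((ℝ × ℝ) × (ℝ × ℝ))}
    (h : IsMatching β γ s) (hs : s' ⊆ s) {x y : ℝ} (hxy : x ≤ y)
    (hb : ∀ e ∈ s', x ≤ e.1.1 ∧ e.1.2 ≤ y) : ∑ e ∈ s', mass e.1 ≤ y - x := by
  classical
  have := sum_mass_le β (s'.image Prod.fst) (by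
    intro p hp
    obtain ⟨e, he, rfl⟩ := Finset.mem_image.1 hp
    exact (h.1 e (hs he)).1) x y hxy (by
    intro p hp
    obtain ⟨e, he, rfl⟩ := Finset.mem_image.1 hp
    exact hb e he)
  rwa [Finset.sum_image] at this
  intro e he e' he' heq
  exact h.inj_fst (hs he) (hs he') heq

lemma IsMatching.sum_snd_le {β γ : IntervalPartition} {s s' : Finset ((ℝ × ℝ) × (ℝ × ℝ))}
    (h : IsMatching β γ s) (hs : s' ⊆ s) {x y : ℝ} (hxy : x ≤ y)
    (hb : ∀ e ∈ s', x ≤ e.2.1 ∧ e.2.2 ≤ y) : ∑ e ∈ s', mass e.2 ≤ y - x := by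
  have := h.symm.sum_fst_le (s' := s'.image Prod.swap) (Finset.image_subset_image hs) hxy (by
    intro p hp
    obtain ⟨e, he, rfl⟩ := Finset.mem_image.1 hp
    exact hb e he)
  rwa [Finset.sum_image Prod.swap_injective.injOn] at this

lemma Close.symm {D : IntervalPartition → ℝ × ℝ → ℝ} {T : IntervalPartition → ℝ}
    {β γ : IntervalPartition} {s : Finset ((ℝ × ℝ) × (ℝ × ℝ))} {δ : ℝ}
    (h : Close D T β γ s δ) : Close D T γ β (s.image Prod.swap) δ := by
  refine ⟨h.matching.symm, ?_, ?_, ?_, ?_⟩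
  · simp only [Finset.sum_image Prod.swap_injective.injOn, Prod.fst_swap, Prod.snd_swap]
    simp only [abs_sub_comm (mass (Prod.snd _))]
    exact h.right
  · simp only [Finset.sum_image Prod.swap_injective.injOn, Prod.fst_swap, Prod.snd_swap]
    simp only [abs_sub_comm (mass (Prod.snd _))]
    exact h.left
  · intro e he
    obtain ⟨e₀, he₀, rfl⟩ := Finset.mem_image.1 he
    rw [abs_sub_comm]
    exact h.div e₀ he₀
  · rw [abs_sub_comm]
    exact h.tot

/-- Matched blocks sit at nearly the same place: the total mass to the left of a block is
determined by the matching up to its distortion. -/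
lemma Close.left_le {D : IntervalPartition → ℝ × ℝ → ℝ} {T : IntervalPartition → ℝ}
    {β γ : IntervalPartition} {s : Finset ((ℝ × ℝ) × (ℝ × ℝ))} {δ : ℝ}
    (h : Close D T β γ s δ) {e : (ℝ × ℝ) × (ℝ × ℝ)} (he : e ∈ s) : e.1.2 - e.2.2 ≤ δ := by
  classical
  have hm := h.matching
  let L := s.filter (fun e' => e'.1.2 ≤ e.1.2)
  let R := s.filter (fun e' => ¬ e'.1.2 ≤ e.1.2)
  have hL : ∑ e' ∈ L, mass e'.2 ≤ e.2.2 - 0 := by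
    apply hm.sum_snd_le (Finset.filter_subset _ _)
    · linarith [(γ.blocks_sub _ (hm.1 e he).2).1, γ.blocks_lt _ (hm.1 e he).2]
    · intro e' he'
      obtain ⟨he', hle⟩ := Finset.mem_filter.1 he'
      refine ⟨(γ.blocks_sub _ (hm.1 e' he').2).1, ?_⟩
      by_cases hee : e' = e
      · rw [hee]
      · rcases hm.2 e' he' e he hee with h1 | h1
        · linarith [γ.blocks_lt _ (hm.1 e he).2]
        · linarith [β.blocks_lt _ (hm.1 e' he').1]
  have hR : ∑ e' ∈ R, mass e'.1 ≤ β.length - e.1.2 := by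
    apply hm.sum_fst_le (Finset.filter_subset _ _)
    · exact (β.blocks_sub _ (hm.1 e he).1).2
    · intro e' he'
      obtain ⟨he', hle⟩ := Finset.mem_filter.1 he'
      refine ⟨?_, (β.blocks_sub _ (hm.1 e' he').1).2⟩
      by_cases hee : e' = e
      · rw [hee] at hle
        exact absurd le_rfl hle
      · rcases hm.2 e' he' e he hee with h1 | h1
        · linarith [β.blocks_lt _ (hm.1 e he).1]
        · exact h1.1
  have hsplit : ∑ e' ∈ L, mass e'.1 + ∑ e' ∈ R, mass e'.1 = ∑ e' ∈ s, mass e'.1 :=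
    Finset.sum_filter_add_sum_filter_not s _ _
  have hdiff : ∑ e' ∈ L, mass e'.1 - ∑ e' ∈ L, mass e'.2 ≤ ∑ e' ∈ s, |mass e'.1 - mass e'.2| := by
    rw [← Finset.sum_sub_distrib]
    calc _ ≤ ∑ e' ∈ L, |mass e'.1 - mass e'.2| := Finset.sum_le_sum fun _ _ => le_abs_self _
      _ ≤ _ := Finset.sum_le_sum_of_subset_of_nonneg (Finset.filter_subset _ _)
        fun _ _ _ => abs_nonneg _
  have := h.left
  linarith

lemma Close.abs_right_le {D : IntervalPartition → ℝ × ℝ → ℝ} {T : IntervalPartition → ℝ}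
    {β γ : IntervalPartition} {s : Finset ((ℝ × ℝ) × (ℝ × ℝ))} {δ : ℝ}
    (h : Close D T β γ s δ) {e : (ℝ × ℝ) × (ℝ × ℝ)} (he : e ∈ s) : |e.1.2 - e.2.2| ≤ δ := by
  rw [abs_le]
  have h1 := h.left_le he
  have h2 := h.symm.left_le (Finset.mem_image_of_mem _ he)
  simp only [Prod.fst_swap, Prod.snd_swap] at h2
  constructor <;> linarith

/-! ### The pseudometric -/

lemma Close.nonneg {D : IntervalPartition → ℝ × ℝ → ℝ} {T : IntervalPartition → ℝ}
    {β γ : IntervalPartition} {s : Finset ((ℝ × ℝ) × (ℝ × ℝ))} {δ : ℝ}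
    (h : Close D T β γ s δ) : 0 ≤ δ :=
  (abs_nonneg _).trans h.tot

lemma Close.mono {D : IntervalPartition → ℝ × ℝ → ℝ} {T : IntervalPartition → ℝ}
    {β γ : IntervalPartition} {s : Finset ((ℝ × ℝ) × (ℝ × ℝ))} {δ δ' : ℝ}
    (h : Close D T β γ s δ) (hδ : δ ≤ δ') : Close D T β γ s δ' :=
  ⟨h.matching, h.left.trans hδ, h.right.trans hδ, fun e he => (h.div e he).trans hδ,
    h.tot.trans hδ⟩

lemma dG_lt_iff {D : IntervalPartition → ℝ × ℝ → ℝ} {T : IntervalPartition → ℝ}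
    {β γ : IntervalPartition} {r : ℝ} :
    dG D T β γ < r ↔ ∃ δ < r, ∃ s, Close D T β γ s δ := by
  unfold dG
  rw [csInf_lt_iff]
  · exact ⟨fun ⟨δ, ⟨s, h⟩, hr⟩ => ⟨δ, hr, s, h⟩, fun ⟨δ, hr, s, h⟩ => ⟨δ, ⟨s, h⟩, hr⟩⟩
  · exact ⟨0, fun δ ⟨s, h⟩ => h.nonneg⟩
  · refine ⟨max (max β.length γ.length) |T β - T γ|, ∅, ⟨by simp, by simp⟩, ?_, ?_, by simp,
      le_max_right _ _⟩
    · simp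
    · simp

lemma dG_nonneg {D : IntervalPartition → ℝ × ℝ → ℝ} {T : IntervalPartition → ℝ}
    {β γ : IntervalPartition} : 0 ≤ dG D T β γ :=
  Real.sInf_nonneg fun _ ⟨_, h⟩ => h.nonneg

lemma dG_le {D : IntervalPartition → ℝ × ℝ → ℝ} {T : IntervalPartition → ℝ}
    {β γ : IntervalPartition} {s : Finset ((ℝ × ℝ) × (ℝ × ℝ))} {δ : ℝ}
    (h : Close D T β γ s δ) : dG D T β γ ≤ δ :=
  csInf_le ⟨0, fun _ ⟨_, h⟩ => h.nonneg⟩ ⟨s, h⟩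

lemma dG_comm_le {D : IntervalPartition → ℝ × ℝ → ℝ} {T : IntervalPartition → ℝ}
    {β γ : IntervalPartition} : dG D T β γ ≤ dG D T γ β := by
  apply le_of_forall_gt
  intro r hr
  obtain ⟨δ, hδ, s, h⟩ := dG_lt_iff.1 hr
  exact (dG_le h.symm).trans_lt hδ

lemma correspondence_injective {β γ : IntervalPartition} {n : ℕ}
    {c : Fin n → (ℝ × ℝ) × (ℝ × ℝ)} (hc : IsCorrespondence β γ n c) :
    Function.Injective (fun j => (c j).1) := by
  have key : ∀ j k, j < k → (c j).1 ≠ (c k).1 := by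
    intro j k hjk heq
    have := (hc.2 j k hjk).1
    rw [heq] at this
    linarith [β.blocks_lt _ (hc.1 k).1]
  intro j k hjk
  by_contra hne
  rcases lt_or_gt_of_ne hne with h | h
  · exact key _ _ h hjk
  · exact key _ _ h hjk.symm

/-- The matching that pairs the members of two increasing sequences of blocks of equal length. -/
lemma close_of_seq {D : IntervalPartition → ℝ × ℝ → ℝ} {T : IntervalPartition → ℝ}
    {β γ : IntervalPartition} {δ : ℝ} {n : ℕ} (c : Fin n → (ℝ × ℝ) × (ℝ × ℝ))
    (hc : IsCorrespondence β γ n c) (h1 : hausDistortion β γ n c ≤ δ)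
    (h2 : ∀ j, |D β (c j).1 - D γ (c j).2| ≤ δ) (h3 : |T β - T γ| ≤ δ) :
    ∃ s, Close D T β γ s δ := by
  classical
  have hinj : Function.Injective c :=
    fun j k hjk => correspondence_injective hc (congrArg Prod.fst hjk)
  unfold hausDistortion at h1
  refine ⟨Finset.univ.image c, ⟨?_, ?_⟩, ?_, ?_, ?_, h3⟩
  · intro e he
    obtain ⟨j, _, rfl⟩ := Finset.mem_image.1 he
    exact hc.1 j
  · intro e he e' he' hne
    obtain ⟨j, _, rfl⟩ := Finset.mem_image.1 he
    obtain ⟨k, _, rfl⟩ := Finset.mem_image.1 he'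
    rcases lt_trichotomy j k with h | h | h
    · exact Or.inl (hc.2 _ _ h)
    · exact absurd (by rw [h]) hne
    · exact Or.inr (hc.2 _ _ h)
  · simp only [Finset.sum_image hinj.injOn]
    exact (le_max_left _ _).trans h1
  · simp only [Finset.sum_image hinj.injOn]
    exact (le_max_right _ _).trans h1
  · intro e he
    obtain ⟨j, _, rfl⟩ := Finset.mem_image.1 he
    exact h2 j

/-- Conversely, sorting a matching yields a correspondence. -/
lemma Close.exists_seq {D : IntervalPartition → ℝ × ℝ → ℝ} {T : IntervalPartition → ℝ}
    {β γ : IntervalPartition} {δ : ℝ} {s : Finset ((ℝ × ℝ) × (ℝ × ℝ))}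
    (h : Close D T β γ s δ) :
    ∃ n, ∃ c : Fin n → (ℝ × ℝ) × (ℝ × ℝ), IsCorrespondence β γ n c ∧
      hausDistortion β γ n c ≤ δ ∧ ∀ j, |D β (c j).1 - D γ (c j).2| ≤ δ := by
  have hm := h.matching
  obtain ⟨c, h1, h2, h3⟩ := exists_enum s (fun e => e.1.1) (by
    intro e he e' he' heq
    exact hm.inj_fst he he' (block_eq_of_left (hm.1 e he).1 (hm.1 e' he').1 heq))
  refine ⟨_, c, ⟨fun j => hm.1 _ (h1 j), ?_⟩, ?_, fun j => h.div _ (h1 j)⟩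
  · intro j k hjk
    have hlt := h2 j k hjk
    rcases hm.2 _ (h1 j) _ (h1 k) (fun heq => by rw [heq] at hlt; exact lt_irrefl _ hlt) with h4 | h4
    · exact h4
    · linarith [β.blocks_lt _ (hm.1 _ (h1 k)).1, h4.1]
  · unfold hausDistortion
    rw [h3 (fun e => |mass e.1 - mass e.2|), h3 (fun e => mass e.1), h3 (fun e => mass e.2)]
    exact max_le h.left h.right

lemma dG_self {D : IntervalPartition → ℝ × ℝ → ℝ} {T : IntervalPartition → ℝ}
    (β : IntervalPartition) : dG D T β β = 0 := by
  apply le_antisymm _ dG_nonneg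
  apply le_of_forall_pos_le_add
  intro ε hε
  rw [zero_add]
  obtain ⟨n, c, h1, h2, h3⟩ := exists_seq_blocks β hε
  obtain ⟨s, hs⟩ := close_of_seq (D := D) (T := T) (β := β) (γ := β) (δ := ε)
    (fun j => (c j, c j)) ⟨fun j => ⟨h1 j, h1 j⟩, fun j k hjk => ⟨h2 j k hjk, h2 j k hjk⟩⟩
    (by unfold hausDistortion; simpa using h3) (fun j => by simpa using hε.le)
    (by simpa using hε.le)
  exact dG_le hs

/-- The mass estimate behind the triangle inequality. The index set `W` consists of the pairs
that can be composed; `u`, `v` are the masses of the pairs in the first matching and `v'`, `w`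
those in the second, and `hV` says that the middle blocks of both matchings taken together, with
the shared ones counted once, fit into the middle partition. -/
lemma compose_sum {ι κ κ' : Type*} [DecidableEq κ] [DecidableEq κ'] (W : Finset ι)
    (s : Finset κ) (s' : Finset κ') (π : ι → κ) (π' : ι → κ')
    (hπ : ∀ i ∈ W, π i ∈ s) (hπ' : ∀ i ∈ W, π' i ∈ s')
    (iπ : Set.InjOn π W) (iπ' : Set.InjOn π' W) (u v : κ → ℝ) (v' w : κ' → ℝ)
    (hv : ∀ i ∈ W, v (π i) = v' (π' i)) (b g δ₁ δ₂ : ℝ)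
    (hV : ∑ e ∈ s \ W.image π, v e + ∑ e ∈ s', v' e ≤ g)
    (h1 : (∑ e ∈ s, |u e - v e|) + b - ∑ e ∈ s, u e ≤ δ₁)
    (h2 : (∑ e ∈ s', |v' e - w e|) + g - ∑ e ∈ s', v' e ≤ δ₂) :
    (∑ i ∈ W, |u (π i) - w (π' i)|) + b - ∑ i ∈ W, u (π i) ≤ δ₁ + δ₂ := by
  have hA : W.image π ⊆ s := Finset.image_subset_iff.2 hπ
  have hB : W.image π' ⊆ s' := Finset.image_subset_iff.2 hπ'
  have e1 := Finset.sum_sdiff hA (f := u)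
  have e2 := Finset.sum_sdiff hA (f := fun e => |u e - v e|)
  rw [Finset.sum_image iπ] at e1 e2
  have e3 : ∑ i ∈ W, |v' (π' i) - w (π' i)| ≤ ∑ e ∈ s', |v' e - w e| := by
    rw [← Finset.sum_image (f := fun e => |v' e - w e|) iπ']
    exact Finset.sum_le_sum_of_subset_of_nonneg hB fun _ _ _ => abs_nonneg _
  have e4 : ∑ i ∈ W, |u (π i) - w (π' i)| ≤
      ∑ i ∈ W, |u (π i) - v (π i)| + ∑ i ∈ W, |v' (π' i) - w (π' i)| := by
    rw [← Finset.sum_add_distrib]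
    apply Finset.sum_le_sum
    intro i hi
    rw [hv i hi]
    exact abs_sub_le _ _ _
  have e5 : ∑ e ∈ s \ W.image π, u e ≤
      ∑ e ∈ s \ W.image π, |u e - v e| + ∑ e ∈ s \ W.image π, v e := by
    rw [← Finset.sum_add_distrib]
    apply Finset.sum_le_sum
    intro e _
    linarith [le_abs_self (u e - v e)]
  linarith

lemma Close.trans {D : IntervalPartition → ℝ × ℝ → ℝ} {T : IntervalPartition → ℝ}
    {β γ η : IntervalPartition} {s s' : Finset ((ℝ × ℝ) × (ℝ × ℝ))} {δ₁ δ₂ : ℝ}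
    (h : Close D T β γ s δ₁) (h' : Close D T γ η s' δ₂) :
    ∃ t, Close D T β η t (δ₁ + δ₂) := by
  classical
  have hm := h.matching
  have hm' := h'.matching
  let W := (s ×ˢ s').filter (fun i => i.1.2 = i.2.1)
  have hW : ∀ i ∈ W, i.1 ∈ s ∧ i.2 ∈ s' ∧ i.1.2 = i.2.1 := by
    intro i hi
    obtain ⟨hi1, hi2⟩ := Finset.mem_filter.1 hi
    exact ⟨(Finset.mem_product.1 hi1).1, (Finset.mem_product.1 hi1).2, hi2⟩
  have i1 : Set.InjOn Prod.fst (W : Set (((ℝ × ℝ) × (ℝ × ℝ)) × ((ℝ × ℝ) × (ℝ × ℝ)))) := by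
    intro i hi j hj hij
    have a := hW i hi
    have b := hW j hj
    exact Prod.ext hij (hm'.inj_fst a.2.1 b.2.1 (by rw [← a.2.2, ← b.2.2, hij]))
  have i2 : Set.InjOn Prod.snd (W : Set (((ℝ × ℝ) × (ℝ × ℝ)) × ((ℝ × ℝ) × (ℝ × ℝ)))) := by
    intro i hi j hj hij
    have a := hW i hi
    have b := hW j hj
    exact Prod.ext (hm.inj_snd a.1 b.1 (by rw [a.2.2, b.2.2, hij])) hij
  have i3 : Set.InjOn (fun i => ((i.1.1, i.2.2) : (ℝ × ℝ) × (ℝ × ℝ)))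
      (W : Set (((ℝ × ℝ) × (ℝ × ℝ)) × ((ℝ × ℝ) × (ℝ × ℝ)))) := by
    intro i hi j hj hij
    simp only [Prod.mk.injEq] at hij
    exact i1 hi hj (hm.inj_fst (hW i hi).1 (hW j hj).1 hij.1)
  refine ⟨W.image (fun i => (i.1.1, i.2.2)), ⟨?_, ?_⟩, ?_, ?_, ?_, ?_⟩
  · intro e he
    obtain ⟨i, hi, rfl⟩ := Finset.mem_image.1 he
    exact ⟨(hm.1 _ (hW i hi).1).1, (hm'.1 _ (hW i hi).2.1).2⟩
  · intro e he e' he' hne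
    obtain ⟨i, hi, rfl⟩ := Finset.mem_image.1 he
    obtain ⟨j, hj, rfl⟩ := Finset.mem_image.1 he'
    have a := hW i hi
    have b := hW j hj
    have hij : i ≠ j := fun h => hne (by rw [h])
    have c1 := hm.2 _ a.1 _ b.1 (fun h => hij (i1 hi hj h))
    have c2 := hm'.2 _ a.2.1 _ b.2.1 (fun h => hij (i2 hi hj h))
    have l1 := γ.blocks_lt _ (hm.1 _ a.1).2
    have l2 := γ.blocks_lt _ (hm.1 _ b.1).2
    rw [← a.2.2, ← b.2.2] at c2
    simp only
    rcases c1 with c1 | c1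
    · rcases c2 with c2 | c2
      · exact Or.inl ⟨c1.1, c2.2⟩
      · linarith [c1.2, c2.1]
    · rcases c2 with c2 | c2
      · linarith [c1.2, c2.1]
      · exact Or.inr ⟨c1.1, c2.2⟩
  · simp only [Finset.sum_image i3]
    refine compose_sum W s s' Prod.fst Prod.snd (fun i hi => (hW i hi).1)
      (fun i hi => (hW i hi).2.1) i1 i2 (fun e => mass e.1) (fun e => mass e.2)
      (fun e => mass e.1) (fun e => mass e.2) (fun i hi => by rw [(hW i hi).2.2]) _ γ.length _ _
      ?_ h.left h'.left
    have hdis : Disjoint ((s \ W.image Prod.fst).image Prod.snd) (s'.image Prod.fst) := by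
      rw [Finset.disjoint_left]
      intro p hp hp'
      obtain ⟨e, he, rfl⟩ := Finset.mem_image.1 hp
      obtain ⟨e', he', heq⟩ := Finset.mem_image.1 hp'
      obtain ⟨he1, he2⟩ := Finset.mem_sdiff.1 he
      exact he2 (Finset.mem_image.2 ⟨(e, e'), Finset.mem_filter.2
        ⟨Finset.mem_product.2 ⟨he1, he'⟩, heq.symm⟩, rfl⟩)
    have := sum_mass_le γ ((s \ W.image Prod.fst).image Prod.snd ∪ s'.image Prod.fst) (by
      intro p hp
      rcases Finset.mem_union.1 hp with hp | hp
      · obtain ⟨e, he, rfl⟩ := Finset.mem_image.1 hp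
        exact (hm.1 e (Finset.mem_sdiff.1 he).1).2
      · obtain ⟨e, he, rfl⟩ := Finset.mem_image.1 hp
        exact (hm'.1 e he).1) 0 γ.length γ.length_nonneg (by
      intro p hp
      apply γ.blocks_sub
      rcases Finset.mem_union.1 hp with hp | hp
      · obtain ⟨e, he, rfl⟩ := Finset.mem_image.1 hp
        exact (hm.1 e (Finset.mem_sdiff.1 he).1).2
      · obtain ⟨e, he, rfl⟩ := Finset.mem_image.1 hp
        exact (hm'.1 e he).1)
    rw [Finset.sum_union hdis, Finset.sum_image, Finset.sum_image, sub_zero] at this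
    · exact this
    · intro e he e' he' heq
      exact hm'.inj_fst he he' heq
    · intro e he e' he' heq
      exact hm.inj_snd (Finset.mem_sdiff.1 he).1 (Finset.mem_sdiff.1 he').1 heq
  · simp only [Finset.sum_image i3]
    rw [add_comm δ₁]
    simp only [abs_sub_comm (mass (Prod.fst _)) (mass (Prod.snd _))]
    refine compose_sum W s' s Prod.snd Prod.fst (fun i hi => (hW i hi).2.1)
      (fun i hi => (hW i hi).1) i2 i1 (fun e => mass e.2) (fun e => mass e.1)
      (fun e => mass e.2) (fun e => mass e.1) (fun i hi => by rw [(hW i hi).2.2]) _ γ.length _ _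
      ?_ (by simpa only [abs_sub_comm] using h'.right) (by simpa only [abs_sub_comm] using h.right)
    have hdis : Disjoint ((s' \ W.image Prod.snd).image Prod.fst) (s.image Prod.snd) := by
      rw [Finset.disjoint_left]
      intro p hp hp'
      obtain ⟨e, he, rfl⟩ := Finset.mem_image.1 hp
      obtain ⟨e', he', heq⟩ := Finset.mem_image.1 hp'
      obtain ⟨he1, he2⟩ := Finset.mem_sdiff.1 he
      exact he2 (Finset.mem_image.2 ⟨(e', e), Finset.mem_filter.2
        ⟨Finset.mem_product.2 ⟨he', he1⟩, heq⟩, rfl⟩)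
    have hbl : ∀ p ∈ (s' \ W.image Prod.snd).image Prod.fst ∪ s.image Prod.snd,
        p ∈ γ.blocks := by
      intro p hp
      rcases Finset.mem_union.1 hp with hp | hp
      · obtain ⟨e, he, rfl⟩ := Finset.mem_image.1 hp
        exact (hm'.1 e (Finset.mem_sdiff.1 he).1).1
      · obtain ⟨e, he, rfl⟩ := Finset.mem_image.1 hp
        exact (hm.1 e he).2
    have := sum_mass_le γ _ hbl 0 γ.length γ.length_nonneg
      (fun p hp => γ.blocks_sub p (hbl p hp))
    rw [Finset.sum_union hdis, Finset.sum_image, Finset.sum_image, sub_zero] at this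
    · exact this
    · intro e he e' he' heq
      exact hm.inj_snd he he' heq
    · intro e he e' he' heq
      exact hm'.inj_fst (Finset.mem_sdiff.1 he).1 (Finset.mem_sdiff.1 he').1 heq
  · intro e he
    obtain ⟨i, hi, rfl⟩ := Finset.mem_image.1 he
    have a := hW i hi
    have d1 := h.div _ a.1
    have d2 := h'.div _ a.2.1
    rw [← a.2.2] at d2
    exact (abs_sub_le _ _ _).trans (add_le_add d1 d2)
  · exact (abs_sub_le _ _ _).trans (add_le_add h.tot h'.tot)

lemma dG_triangle {D : IntervalPartition → ℝ × ℝ → ℝ} {T : IntervalPartition → ℝ}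
    (β γ η : IntervalPartition) : dG D T β η ≤ dG D T β γ + dG D T γ η := by
  apply le_of_forall_pos_le_add
  intro ε hε
  obtain ⟨δ₁, h1, s, hs⟩ := dG_lt_iff.1 (lt_add_of_pos_right (dG D T β γ) (half_pos hε))
  obtain ⟨δ₂, h2, s', hs'⟩ := dG_lt_iff.1 (lt_add_of_pos_right (dG D T γ η) (half_pos hε))
  obtain ⟨t, ht⟩ := hs.trans hs'
  have := dG_le ht
  linarith

lemma dA_eq (a : ℝ) (β γ : IntervalPartition) :
    dA a β γ = dG (blockDiversity a) (totalDiversity a) β γ := by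
  apply le_antisymm
  · apply le_of_forall_gt
    intro r hr
    obtain ⟨δ, hδ, s, h⟩ := dG_lt_iff.1 hr
    obtain ⟨n, c, h1, h2, h3⟩ := h.exists_seq
    refine lt_of_le_of_lt (csInf_le ⟨0, ?_⟩ ⟨n, c, h1, rfl⟩) (lt_of_le_of_lt ?_ hδ)
    · rintro x ⟨n, c, _, rfl⟩
      exact (abs_nonneg _).trans ((le_max_right _ _).trans (le_max_right _ _))
    · exact max_le h2 (max_le (Real.iSup_le h3 h.nonneg) h.tot)
  · refine le_csInf ⟨_, 0, Fin.elim0, ⟨fun j => j.elim0, fun j => j.elim0⟩, rfl⟩ ?_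
    rintro x ⟨n, c, hc, rfl⟩
    obtain ⟨s, hs⟩ := close_of_seq (D := blockDiversity a) (T := totalDiversity a)
      (δ := alphaDistortion a β γ n c) c hc (le_max_left _ _) (fun j =>
        (le_ciSup (f := fun j => |blockDiversity a β (c j).1 - blockDiversity a γ (c j).2|)
          (Set.finite_range _).bddAbove j).trans ((le_max_left _ _).trans (le_max_right _ _)))
      ((le_max_right _ _).trans (le_max_right _ _))
    exact dG_le hs

lemma hausDistortion_nonneg {β γ : IntervalPartition} {n : ℕ}
    {c : Fin n → (ℝ × ℝ) × (ℝ × ℝ)} (hc : IsCorrespondence β γ n c) :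
    0 ≤ hausDistortion β γ n c := by
  have hle : (∑ j, mass (c j).1) ≤ β.length := by
    classical
    have hinj := correspondence_injective hc
    have := sum_mass_le β (Finset.univ.image fun j => (c j).1) (by
      intro p hp
      obtain ⟨j, _, rfl⟩ := Finset.mem_image.1 hp
      exact (hc.1 j).1) 0 β.length β.length_nonneg (by
      intro p hp
      obtain ⟨j, _, rfl⟩ := Finset.mem_image.1 hp
      exact β.blocks_sub _ (hc.1 j).1)
    rw [Finset.sum_image hinj.injOn] at this
    linarith
  refine le_trans ?_ (le_max_left _ _)
  have : 0 ≤ ∑ j : Fin n, |mass (c j).1 - mass (c j).2| :=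
    Finset.sum_nonneg fun _ _ => abs_nonneg _
  linarith

lemma dHp_eq (β γ : IntervalPartition) :
    dHp β γ = dG (fun _ _ => 0) (fun _ => 0) β γ := by
  apply le_antisymm
  · apply le_of_forall_gt
    intro r hr
    obtain ⟨δ, hδ, s, h⟩ := dG_lt_iff.1 hr
    obtain ⟨n, c, h1, h2, h3⟩ := h.exists_seq
    refine lt_of_le_of_lt (csInf_le ⟨0, ?_⟩ ⟨n, c, h1, rfl⟩) (h2.trans_lt hδ)
    rintro x ⟨n, c, hc, rfl⟩
    exact hausDistortion_nonneg hc
  · refine le_csInf ⟨_, 0, Fin.elim0, ⟨fun j => j.elim0, fun j => j.elim0⟩, rfl⟩ ?_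
    rintro x ⟨n, c, hc, rfl⟩
    have h0 := hausDistortion_nonneg hc
    obtain ⟨s, hs⟩ := close_of_seq (D := fun _ _ => 0) (T := fun _ => 0)
      (δ := hausDistortion β γ n c) c hc le_rfl (fun j => by simpa using h0)
      (by simpa using h0)
    exact dG_le hs

/-! ### Separability -/

lemma abs_sub_le_of_floor {x y ε : ℝ} (hε : 0 < ε) (h : ⌊x / ε⌋ = ⌊y / ε⌋) : |x - y| ≤ ε := by
  have := Int.abs_sub_lt_one_of_floor_eq_floor h
  rw [← sub_div, abs_div, abs_of_pos hε, div_lt_one hε] at this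
  exact this.le

lemma sigma_fin_ext {κ : Type*} {n m : ℕ} {f : Fin n → κ} {g : Fin m → κ}
    (h : (⟨n, f⟩ : Σ n, Fin n → κ) = ⟨m, g⟩) :
    ∃ hnm : n = m, ∀ j, f j = g (Fin.cast hnm j) := by
  obtain ⟨rfl, h⟩ := Sigma.mk.inj_iff.1 h
  exact ⟨rfl, fun j => congrFun (eq_of_heq h) j⟩

/-- Countably many rounded finite records of block masses and `D`-values suffice to cut the
space into pieces of `dG`-diameter at most `ε`. -/
lemma exists_discretization (D : IntervalPartition → ℝ × ℝ → ℝ) (T : IntervalPartition → ℝ)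
    {ε : ℝ} (hε : 0 < ε) :
    ∃ F : IntervalPartition → (Σ n, Fin n → ℤ × ℤ) × ℤ, ∀ β γ, F β = F γ → dG D T β γ ≤ ε := by
  choose n c h1 h2 h3 using fun β => exists_seq_blocks β (half_pos hε)
  refine ⟨fun β => (⟨n β, fun j => (⌊mass (c β j) / (ε / 2 / (n β + 1))⌋, ⌊D β (c β j) / ε⌋)⟩,
    ⌊T β / ε⌋), ?_⟩
  intro β γ hF
  obtain ⟨hF1, hF2⟩ := Prod.ext_iff.1 hF
  obtain ⟨hn, hF1⟩ := sigma_fin_ext hF1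
  have hn' : (0 : ℝ) < n β + 1 := by positivity
  have hstep : 0 < ε / 2 / (n β + 1) := by positivity
  have hmass : ∀ j, |mass (c β j) - mass (c γ (Fin.cast hn j))| ≤ ε / 2 / (n β + 1) := by
    intro j
    have := (Prod.ext_iff.1 (hF1 j)).1
    have hnr : (n γ : ℝ) = n β := by rw [hn]
    rw [hnr] at this
    exact abs_sub_le_of_floor hstep this
  have hsum : ∑ j, |mass (c β j) - mass (c γ (Fin.cast hn j))| ≤ ε / 2 := by
    calc _ ≤ ∑ _j : Fin (n β), ε / 2 / (n β + 1) := Finset.sum_le_sum fun j _ => hmass j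
      _ = n β * (ε / 2 / (n β + 1)) := by simp
      _ ≤ (n β + 1) * (ε / 2 / (n β + 1)) := by gcongr; linarith
      _ = ε / 2 := by field_simp
  have hγ : ∑ j : Fin (n β), mass (c γ (Fin.cast hn j)) = ∑ j, mass (c γ j) :=
    Fintype.sum_equiv (finCongr hn) _ _ (fun j => rfl)
  obtain ⟨s, hs⟩ := close_of_seq (D := D) (T := T) (β := β) (γ := γ) (δ := ε)
    (fun j => (c β j, c γ (Fin.cast hn j)))
    ⟨fun j => ⟨h1 β j, h1 γ _⟩, fun j k hjk => ⟨h2 β j k hjk, h2 γ _ _ (by simpa using hjk)⟩⟩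
    (by
      unfold hausDistortion
      simp only [hγ]
      apply max_le
      · linarith [h3 β]
      · linarith [h3 γ])
    (fun j => abs_sub_le_of_floor hε (Prod.ext_iff.1 (hF1 j)).2)
    (abs_sub_le_of_floor hε hF2)
  exact dG_le hs

/-- `I_α` with the pseudometric `dG D T`. -/
noncomputable abbrev pseudoMetric (a : ℝ) (D : IntervalPartition → ℝ × ℝ → ℝ)
    (T : IntervalPartition → ℝ) : PseudoMetricSpace (Ia a) where
  dist x y := dG D T x.val y.val
  dist_self x := dG_self x.val
  dist_comm _ _ := le_antisymm dG_comm_le dG_comm_le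
  dist_triangle x y z := dG_triangle x.val y.val z.val

lemma generateFrom_balls {X : Type*} [P : PseudoMetricSpace X] :
    TopologicalSpace.generateFrom {s : Set X | ∃ x : X, ∃ r : ℝ, s = {y | dist x y < r}} =
      P.toUniformSpace.toTopologicalSpace := by
  apply le_antisymm
  · intro U hU
    have : U = ⋃₀ {s | s ⊆ U ∧ ∃ x : X, ∃ r : ℝ, s = {y | dist x y < r}} := by
      apply Set.Subset.antisymm
      · intro x hx
        obtain ⟨r, hr, hsub⟩ := Metric.isOpen_iff.1 hU x hx
        refine Set.mem_sUnion.2 ⟨{y | dist x y < r}, ⟨?_, x, r, rfl⟩, by simpa using hr⟩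
        intro y hy
        exact hsub (by rw [Metric.mem_ball, dist_comm]; exact hy)
      · exact Set.sUnion_subset fun s hs => hs.1
    rw [this]
    exact TopologicalSpace.GenerateOpen.sUnion _ fun s hs =>
      TopologicalSpace.GenerateOpen.basic _ hs.2
  · apply le_generateFrom
    rintro s ⟨x, r, rfl⟩
    exact isOpen_lt (continuous_const.dist continuous_id) continuous_const

lemma secondCountable_topOfDist (a : ℝ) (D : IntervalPartition → ℝ × ℝ → ℝ)
    (T : IntervalPartition → ℝ) :
    @SecondCountableTopology (Ia a) (topOfDist a fun x y => dG D T x.val y.val) := by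
  let := pseudoMetric a D T
  have h : topOfDist a (fun x y => dG D T x.val y.val) =
      (pseudoMetric a D T).toUniformSpace.toTopologicalSpace := generateFrom_balls
  rw [h]
  apply Metric.secondCountable_of_countable_discretization
  intro ε hε
  obtain ⟨F, hF⟩ := exists_discretization D T hε
  exact ⟨_, Encodable.ofCountable _, fun x => F x.val, fun x y hxy => hF _ _ hxy⟩

/-! ### Comparison of the topologies -/

/-- If `d'` is dominated by a multiple of `d`, then the topology of `d` is finer. -/
lemma topOfDist_le (a C : ℝ) (hC : 0 < C) (d d' : Ia a → Ia a → ℝ) (h0 : ∀ x, d x x = 0)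
    (htri : ∀ x y z, d' x z ≤ d' x y + d' y z) (h : ∀ x y, d' x y ≤ C * d x y) :
    topOfDist a d ≤ topOfDist a d' := by
  apply le_generateFrom
  rintro s ⟨x, r, rfl⟩
  have : {y | d' x y < r} =
      ⋃₀ {s | s ⊆ {y | d' x y < r} ∧ ∃ x : Ia a, ∃ r : ℝ, s = {y | d x y < r}} := by
    apply Set.Subset.antisymm
    · intro y hy
      have hy' : 0 < r - d' x y := sub_pos.2 hy
      refine Set.mem_sUnion.2 ⟨{z | d y z < (r - d' x y) / C}, ⟨?_, y, _, rfl⟩, ?_⟩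
      · intro z hz
        have hz : d y z < (r - d' x y) / C := hz
        rw [lt_div_iff₀ hC] at hz
        have := htri x y z
        have := h y z
        change d' x z < r
        linarith
      · change d y y < _
        rw [h0]
        positivity
    · exact Set.sUnion_subset fun s hs => hs.1
  rw [this]
  exact TopologicalSpace.GenerateOpen.sUnion _ fun s hs =>
    TopologicalSpace.GenerateOpen.basic _ hs.2

lemma dHp_le_dA (a : ℝ) (β γ : IntervalPartition) : dHp β γ ≤ dA a β γ := by
  rw [dHp_eq, dA_eq]
  apply le_of_forall_gt
  intro r hr
  obtain ⟨δ, hδ, s, h⟩ := dG_lt_iff.1 hr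
  have h0 := h.nonneg
  refine (dG_le (s := s) (δ := δ) ⟨h.matching, h.left, h.right, ?_, ?_⟩).trans_lt hδ
  · intro e _
    simpa using h0
  · simpa using h0

/-- Every point of one complement is close to a point of the other: move to the nearest matched
right endpoint on its left and cross over to the partner block. -/
lemma Close.exists_near {D : IntervalPartition → ℝ × ℝ → ℝ} {T : IntervalPartition → ℝ}
    {β γ : IntervalPartition} {s : Finset ((ℝ × ℝ) × (ℝ × ℝ))} {δ : ℝ}
    (h : Close D T β γ s δ) {z : ℝ} (hz : z ∈ β.cset) : ∃ w ∈ γ.cset, dist z w ≤ 2 * δ := by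
  classical
  have hm := h.matching
  have h0 := h.nonneg
  let L := s.filter (fun e => e.1.2 ≤ z)
  let R := s.filter (fun e => ¬ e.1.2 ≤ z)
  have hR : ∑ e ∈ R, mass e.1 ≤ β.length - z := by
    apply hm.sum_fst_le (Finset.filter_subset _ _) hz.1.2
    intro e he
    obtain ⟨he, hlt⟩ := Finset.mem_filter.1 he
    refine ⟨?_, (β.blocks_sub _ (hm.1 e he).1).2⟩
    by_contra! hc
    exact hz.2 (Set.mem_iUnion₂.2 ⟨e.1, (hm.1 e he).1, hc, not_le.1 hlt⟩)
  have hsplit : ∑ e ∈ L, mass e.1 + ∑ e ∈ R, mass e.1 = ∑ e ∈ s, mass e.1 :=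
    Finset.sum_filter_add_sum_filter_not s _ _
  have habs : 0 ≤ ∑ e ∈ s, |mass e.1 - mass e.2| := Finset.sum_nonneg fun _ _ => abs_nonneg _
  have hleft := h.left
  rcases L.eq_empty_or_nonempty with hL | hL
  · refine ⟨0, zero_mem_cset γ, ?_⟩
    rw [hL, Finset.sum_empty] at hsplit
    rw [Real.dist_eq, sub_zero, abs_of_nonneg hz.1.1]
    linarith
  · obtain ⟨e, he, hmax⟩ := L.exists_max_image (fun e => e.1.2) hL
    obtain ⟨hes, hez⟩ := Finset.mem_filter.1 he
    have hLsum : ∑ e ∈ L, mass e.1 ≤ e.1.2 - 0 := by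
      apply hm.sum_fst_le (Finset.filter_subset _ _)
      · linarith [(β.blocks_sub _ (hm.1 e hes).1).1, β.blocks_lt _ (hm.1 e hes).1]
      · intro e' he'
        exact ⟨(β.blocks_sub _ (hm.1 e' (Finset.mem_filter.1 he').1).1).1, hmax e' he'⟩
    refine ⟨e.2.2, right_mem_cset (hm.1 e hes).2, ?_⟩
    have h1 : dist z e.1.2 ≤ δ := by
      rw [Real.dist_eq, abs_of_nonneg (sub_nonneg.2 hez)]
      linarith
    have h2 : dist e.1.2 e.2.2 ≤ δ := h.abs_right_le hes
    linarith [dist_triangle z e.1.2 e.2.2]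

lemma dH_le_dHp (β γ : IntervalPartition) : dH β γ ≤ 2 * dHp β γ := by
  rw [dHp_eq]
  have key : dH β γ / 2 ≤ dG (fun _ _ => 0) (fun _ => 0) β γ := by
    apply le_of_forall_gt
    intro r hr
    obtain ⟨δ, hδ, s, h⟩ := dG_lt_iff.1 hr
    have : dH β γ ≤ 2 * δ := Metric.hausdorffDist_le_of_mem_dist (by linarith [h.nonneg])
      (fun z hz => h.exists_near hz) (fun z hz => h.symm.exists_near hz)
    linarith
  linarith

lemma isBounded_cset (β : IntervalPartition) : Bornology.IsBounded β.cset :=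
  (Metric.isBounded_Icc 0 β.length).subset Set.sdiff_subset

lemma hausdorffEDist_ne_top (β γ : IntervalPartition) :
    Metric.hausdorffEDist β.cset γ.cset ≠ ⊤ :=
  Metric.hausdorffEDist_ne_top_of_nonempty_of_bounded ⟨0, zero_mem_cset β⟩ ⟨0, zero_mem_cset γ⟩
    (isBounded_cset β) (isBounded_cset γ)

lemma dH_triangle (β γ η : IntervalPartition) : dH β η ≤ dH β γ + dH γ η :=
  Metric.hausdorffDist_triangle (hausdorffEDist_ne_top β γ)

/-! ### Open events for `d_H` -/

lemma isOpen_topOfDist_dH {a : ℝ} {S : Set (Ia a)}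
    (h : ∀ y ∈ S, ∃ ε > 0, ∀ z : Ia a, dH y.val z.val < ε → z ∈ S) :
    IsOpen[topOfDist a fun x y => dH x.val y.val] S := by
  have : S = ⋃₀ {s | s ⊆ S ∧ ∃ x : Ia a, ∃ r : ℝ, s = {y | dH x.val y.val < r}} := by
    apply Set.Subset.antisymm
    · intro y hy
      obtain ⟨ε, hε, hsub⟩ := h y hy
      refine Set.mem_sUnion.2 ⟨{z | dH y.val z.val < ε}, ⟨fun z hz => hsub z hz, y, ε, rfl⟩, ?_⟩
      change Metric.hausdorffDist _ _ < ε
      rw [Metric.hausdorffDist_self_zero]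
      exact hε
    · exact Set.sUnion_subset fun s hs => hs.1
  rw [this]
  exact TopologicalSpace.GenerateOpen.sUnion _ fun s hs =>
    TopologicalSpace.GenerateOpen.basic _ hs.2

/-- The event that a single block contains both `p` and `q`, where `p ≤ q`. -/
def Spans (p q : ℝ) (β : IntervalPartition) : Prop := ∃ U ∈ β.blocks, U.1 < p ∧ q < U.2

lemma isOpen_spans (a : ℝ) {p q : ℝ} (hpq : p ≤ q) :
    IsOpen[topOfDist a fun x y => dH x.val y.val] {y : Ia a | Spans p q y.val} := by
  apply isOpen_topOfDist_dH
  rintro ⟨y, hy⟩ ⟨U, hU, hp, hq⟩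
  refine ⟨min (p - U.1) (U.2 - q), lt_min (sub_pos.2 hp) (sub_pos.2 hq), ?_⟩
  rintro ⟨z, hz⟩ hd
  simp only at hd hU
  obtain ⟨hd1, hd2⟩ := lt_min_iff.1 hd
  -- no point of the complement of `z` can lie in `[p, q]`
  have hno : ∀ t ∈ z.cset, t ∉ Icc p q := by
    intro t ht htpq
    obtain ⟨w, hw, hdist⟩ := Metric.exists_dist_lt_of_hausdorffDist_lt' ht hd
      (hausdorffEDist_ne_top y z)
    rw [Real.dist_eq] at hdist
    obtain ⟨hw1, hw2⟩ := abs_lt.1 (hdist.trans_le (min_le_left _ _))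
    obtain ⟨hw3, hw4⟩ := abs_lt.1 (hdist.trans_le (min_le_right _ _))
    exact hw.2 (Set.mem_iUnion₂.2 ⟨U, hU, by linarith [htpq.1], by linarith [htpq.2]⟩)
  obtain ⟨w, hw, hdist⟩ := Metric.exists_dist_lt_of_hausdorffDist_lt (right_mem_cset hU) hd
    (hausdorffEDist_ne_top y z)
  rw [Real.dist_eq] at hdist
  have hw1 := (abs_lt.1 (hdist.trans_le (min_le_right _ _))).2
  have hql : q < z.length := by linarith [hw.1.2]
  have hp0 : 0 ≤ p := by linarith [(y.blocks_sub U hU).1]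
  have hpz : p ∈ ⋃ V ∈ z.blocks, Ioo V.1 V.2 := by
    by_contra hcon
    exact hno p ⟨⟨hp0, by linarith⟩, hcon⟩ ⟨le_rfl, hpq⟩
  obtain ⟨V, hV, hpV⟩ := Set.mem_iUnion₂.1 hpz
  refine ⟨V, hV, hpV.1, ?_⟩
  by_contra! hc
  exact hno _ (right_mem_cset hV) ⟨hpV.2.le, hc⟩

lemma isOpen_length_gt (a c : ℝ) :
    IsOpen[topOfDist a fun x y => dH x.val y.val] {y : Ia a | c < y.val.length} := by
  apply isOpen_topOfDist_dH
  rintro ⟨y, hy⟩ hc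
  change c < y.length at hc
  refine ⟨y.length - c, sub_pos.2 hc, ?_⟩
  rintro ⟨z, hz⟩ hd
  obtain ⟨w, hw, hdist⟩ := Metric.exists_dist_lt_of_hausdorffDist_lt (length_mem_cset y) hd
    (hausdorffEDist_ne_top y z)
  rw [Real.dist_eq] at hdist
  have := (abs_lt.1 hdist).2
  have := hw.1.2
  change c < z.length
  linarith

/-! ### Measurability of block endpoints and diversities -/

open scoped Classical in
/-- The block of `β` containing `q`, or the junk value `(0, 0)` if there is none. -/
noncomputable def blk (q : ℝ) (β : IntervalPartition) : ℝ × ℝ :=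
  if h : Spans q q β then h.choose else (0, 0)

lemma blk_mem {q : ℝ} {β : IntervalPartition} (h : Spans q q β) :
    blk q β ∈ β.blocks ∧ (blk q β).1 < q ∧ q < (blk q β).2 := by
  unfold blk
  rw [dif_pos h]
  exact h.choose_spec

lemma blk_eq {q : ℝ} {β : IntervalPartition} {U : ℝ × ℝ} (hU : U ∈ β.blocks) (h1 : U.1 < q)
    (h2 : q < U.2) : blk q β = U := by
  have h := blk_mem ⟨U, hU, h1, h2⟩
  exact block_unique h.1 hU h.2 ⟨h1, h2⟩

lemma blk_of_not {q : ℝ} {β : IntervalPartition} (h : ¬ Spans q q β) : blk q β = (0, 0) := by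
  unfold blk
  rw [dif_neg h]

lemma measurable_blk_right {a : ℝ} [MeasurableSpace (Ia a)]
    (hE : ∀ p q : ℝ, p ≤ q → MeasurableSet {y : Ia a | Spans p q y.val}) (q : ℝ) :
    Measurable fun y : Ia a => (blk q y.val).2 := by
  apply measurable_of_Ioi
  intro t
  have : (fun y : Ia a => (blk q y.val).2) ⁻¹' Ioi t =
      {y : Ia a | Spans q (max q t) y.val} ∪
        ({y : Ia a | Spans q q y.val}ᶜ ∩ {_y | t < 0}) := by
    ext y
    change t < (blk q y.val).2 ↔ Spans q (max q t) y.val ∨ (¬ Spans q q y.val ∧ t < 0)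
    by_cases h : Spans q q y.val
    · have hb := blk_mem h
      constructor
      · intro ht
        exact Or.inl ⟨_, hb.1, hb.2.1, max_lt hb.2.2 ht⟩
      · rintro (⟨U, hU, h1, h2⟩ | h')
        · rw [blk_eq hU h1 ((le_max_left _ _).trans_lt h2)]
          exact (le_max_right _ _).trans_lt h2
        · exact absurd h h'.1
    · rw [blk_of_not h]
      constructor
      · intro ht
        exact Or.inr ⟨h, ht⟩
      · rintro (⟨U, hU, h1, h2⟩ | h')
        · exact absurd ⟨U, hU, h1, (le_max_left _ _).trans_lt h2⟩ h
        · exact h'.2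
  rw [this]
  exact (hE _ _ (le_max_left _ _)).union ((hE q q le_rfl).compl.inter (MeasurableSet.const _))

lemma measurable_blk_left {a : ℝ} [MeasurableSpace (Ia a)]
    (hE : ∀ p q : ℝ, p ≤ q → MeasurableSet {y : Ia a | Spans p q y.val}) (q : ℝ) :
    Measurable fun y : Ia a => (blk q y.val).1 := by
  apply measurable_of_Iio
  intro t
  have : (fun y : Ia a => (blk q y.val).1) ⁻¹' Iio t =
      {y : Ia a | Spans (min q t) q y.val} ∪
        ({y : Ia a | Spans q q y.val}ᶜ ∩ {_y | 0 < t}) := by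
    ext y
    change (blk q y.val).1 < t ↔ Spans (min q t) q y.val ∨ (¬ Spans q q y.val ∧ 0 < t)
    by_cases h : Spans q q y.val
    · have hb := blk_mem h
      constructor
      · intro ht
        exact Or.inl ⟨_, hb.1, lt_min hb.2.1 ht, hb.2.2⟩
      · rintro (⟨U, hU, h1, h2⟩ | h')
        · rw [blk_eq hU (h1.trans_le (min_le_left _ _)) h2]
          exact h1.trans_le (min_le_right _ _)
        · exact absurd h h'.1
    · rw [blk_of_not h]
      constructor
      · intro ht
        exact Or.inr ⟨h, ht⟩
      · rintro (⟨U, hU, h1, h2⟩ | h')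
        · exact absurd ⟨U, hU, h1.trans_le (min_le_left _ _), h2⟩ h
        · exact h'.2
  rw [this]
  exact (hE _ _ (min_le_left _ _)).union ((hE q q le_rfl).compl.inter (MeasurableSet.const _))

lemma finite_big_blocks (β : IntervalPartition) (t : ℝ) {h : ℝ} (hh : 0 < h) :
    {p : ℝ × ℝ | p ∈ β.blocks ∧ h < p.2 - p.1 ∧ p.2 ≤ t}.Finite := by
  by_contra hinf
  obtain ⟨k, hk⟩ := exists_nat_gt (β.length / h)
  obtain ⟨F, hF, hcard⟩ := Set.Infinite.exists_subset_card_eq hinf k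
  have h1 := sum_mass_le β F (fun p hp => (hF hp).1) 0 β.length β.length_nonneg
    (fun p hp => β.blocks_sub p (hF hp).1)
  have h2 : F.card • h ≤ ∑ p ∈ F, mass p :=
    Finset.card_nsmul_le_sum F _ _ fun p hp => (hF hp).2.1.le
  rw [hcard, nsmul_eq_mul] at h2
  rw [div_lt_iff₀ hh] at hk
  linarith

/-- Large blocks are counted by rational representatives lying in distinct blocks. -/
lemma le_divCount_iff (β : IntervalPartition) (t : ℝ) {h : ℝ} (hh : 0 < h) (k : ℕ) :
    k ≤ divCount β t h ↔ ∃ Q : Finset ℚ, Q.card = k ∧ ∀ q ∈ Q,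
      (Spans q q β ∧ h < (blk q β).2 - (blk q β).1 ∧ (blk q β).2 ≤ t) ∧
      ∀ q' ∈ Q, q ≠ q' → (blk q β).1 ≠ (blk q' β).1 := by
  classical
  have hfin := finite_big_blocks β t hh
  unfold divCount
  constructor
  · intro hk
    rw [Set.ncard_eq_toFinset_card _ hfin] at hk
    obtain ⟨F, hF, hcard⟩ := Finset.exists_subset_card_eq hk
    have hmem : ∀ p ∈ F, p ∈ β.blocks ∧ h < p.2 - p.1 ∧ p.2 ≤ t := fun p hp =>
      hfin.mem_toFinset.1 (hF hp)
    have hex : ∀ p : ℝ × ℝ, ∃ q : ℚ, p ∈ F → p.1 < q ∧ (q : ℝ) < p.2 := by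
      intro p
      by_cases hp : p ∈ F
      · obtain ⟨q, h1, h2⟩ := exists_rat_btwn (β.blocks_lt p (hmem p hp).1)
        exact ⟨q, fun _ => ⟨h1, h2⟩⟩
      · exact ⟨0, fun h => absurd h hp⟩
    choose ρ hρ using hex
    have hblk : ∀ p ∈ F, blk (ρ p) β = p := fun p hp =>
      blk_eq (hmem p hp).1 (hρ p hp).1 (hρ p hp).2
    refine ⟨F.image ρ, ?_, ?_⟩
    · rw [Finset.card_image_of_injOn, hcard]
      intro p hp p' hp' heq
      rw [← hblk p hp, ← hblk p' hp', heq]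
    · intro q hq
      obtain ⟨p, hp, rfl⟩ := Finset.mem_image.1 hq
      rw [hblk p hp]
      refine ⟨⟨⟨p, (hmem p hp).1, (hρ p hp).1, (hρ p hp).2⟩, (hmem p hp).2⟩, ?_⟩
      intro q' hq' hne
      obtain ⟨p', hp', rfl⟩ := Finset.mem_image.1 hq'
      rw [hblk p' hp']
      intro heq
      exact hne (congrArg ρ (block_eq_of_left (hmem p hp).1 (hmem p' hp').1 heq))
  · rintro ⟨Q, rfl, hQ⟩
    have hinj : Set.InjOn (fun q : ℚ => blk q β) Q := by
      intro q hq q' hq' heq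
      by_contra hne
      exact (hQ q hq).2 q' hq' hne (congrArg Prod.fst heq)
    rw [← Finset.card_image_of_injOn hinj, ← Set.ncard_coe_finset]
    apply Set.ncard_le_ncard _ hfin
    intro p hp
    obtain ⟨q, hq, rfl⟩ := Finset.mem_image.1 (Finset.mem_coe.1 hp)
    exact ⟨(blk_mem (hQ q hq).1.1).1, (hQ q hq).1.2⟩

lemma measurable_divCount {a : ℝ} [MeasurableSpace (Ia a)]
    (hE : ∀ p q : ℝ, p ≤ q → MeasurableSet {y : Ia a | Spans p q y.val}) (t : ℝ) {h : ℝ}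
    (hh : 0 < h) : Measurable fun y : Ia a => divCount y.val t h := by
  apply measurable_of_Ici
  intro k
  have hlo := measurable_blk_left hE
  have hhi := measurable_blk_right hE
  have : (fun y : Ia a => divCount y.val t h) ⁻¹' Ici k =
      {y : Ia a | ∃ Q : Finset ℚ, Q.card = k ∧ ∀ q ∈ Q,
        (Spans q q y.val ∧ h < (blk q y.val).2 - (blk q y.val).1 ∧ (blk q y.val).2 ≤ t) ∧
        ∀ q' ∈ Q, q ≠ q' → (blk q y.val).1 ≠ (blk q' y.val).1} := by
    ext y
    exact le_divCount_iff y.val t hh k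
  rw [this, measurableSet_setOfPred]
  refine Measurable.exists fun Q => measurable_const.and ?_
  refine Measurable.forall fun q => measurable_const.imp ?_
  refine (Measurable.and ?_ (Measurable.and ?_ ?_)).and ?_
  · exact measurableSet_setOfPred.1 (hE q q le_rfl)
  · exact measurableSet_setOfPred.1 (measurableSet_lt measurable_const ((hhi q).sub (hlo q)))
  · exact measurableSet_setOfPred.1 (measurableSet_le (hhi q) measurable_const)
  · refine Measurable.forall fun q' => measurable_const.imp (measurable_const.imp ?_)
    exact (measurableSet_setOfPred.1 (measurableSet_eq_fun (hlo q) (hlo q'))).not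

lemma divCount_of_length_le (β : IntervalPartition) {t : ℝ} (ht : β.length ≤ t) (h : ℝ) :
    divCount β t h = divCount β β.length h := by
  unfold divCount
  congr 1
  ext p
  constructor
  · rintro ⟨h1, h2, _⟩
    exact ⟨h1, h2, (β.blocks_sub p h1).2⟩
  · rintro ⟨h1, h2, h3⟩
    exact ⟨h1, h2, h3.trans ht⟩

lemma divCount_of_neg (β : IntervalPartition) {t : ℝ} (ht : t < 0) (h : ℝ) :
    divCount β t h = 0 := by
  unfold divCount
  have : {p : ℝ × ℝ | p ∈ β.blocks ∧ h < p.2 - p.1 ∧ p.2 ≤ t} = ∅ := by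
    apply Set.eq_empty_of_forall_notMem
    rintro p ⟨h1, _, h3⟩
    linarith [(β.blocks_sub p h1).1, β.blocks_lt p h1]
  rw [this, Set.ncard_empty]

/-- The diversity function is constant on every block. -/
lemma diversity_eq_of_mem_block (a : ℝ) {β : IntervalPartition} {U : ℝ × ℝ} (hU : U ∈ β.blocks)
    {s t : ℝ} (hs : s ∈ Ioo U.1 U.2) (ht : t ∈ Ioo U.1 U.2) :
    diversity a β s = diversity a β t := by
  have key : ∀ s ∈ Ioo U.1 U.2, ∀ t ∈ Ioo U.1 U.2, ∀ p ∈ β.blocks, p.2 ≤ s → p.2 ≤ t := by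
    intro s hs t ht p hp hps
    by_contra! hc
    exact right_notMem_block hp hU ⟨ht.1.trans hc, hps.trans_lt hs.2⟩
  have hcount : ∀ h, divCount β s h = divCount β t h := by
    intro h
    unfold divCount
    congr 1
    ext p
    constructor
    · rintro ⟨h1, h2, h3⟩
      exact ⟨h1, h2, key s hs t ht p h1 h3⟩
    · rintro ⟨h1, h2, h3⟩
      exact ⟨h1, h2, key t ht s hs p h1 h3⟩
  unfold diversity
  simp only [hcount]

lemma exists_hasDiversity {a : ℝ} (y : Ia a) (t : ℝ) : ∃ d, HasDiversity a y.val t d := by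
  rcases lt_or_ge t 0 with h0 | h0
  · refine ⟨0, ?_⟩
    unfold HasDiversity
    simp [divCount_of_neg y.val h0]
  · rcases le_total t y.val.length with h1 | h1
    · exact y.2 t ⟨h0, h1⟩
    · obtain ⟨d, hd⟩ := y.2 y.val.length ⟨y.val.length_nonneg, le_rfl⟩
      refine ⟨d, ?_⟩
      unfold HasDiversity at hd ⊢
      simpa only [divCount_of_length_le y.val h1] using hd

lemma measurable_diversity {a : ℝ} [MeasurableSpace (Ia a)]
    (hE : ∀ p q : ℝ, p ≤ q → MeasurableSet {y : Ia a | Spans p q y.val}) (t : ℝ) :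
    Measurable fun y : Ia a => diversity a y.val t := by
  have hpos : ∀ n : ℕ, (0 : ℝ) < 1 / ((n : ℝ) + 1) := fun n => by positivity
  have hseq : Tendsto (fun n : ℕ => 1 / ((n : ℝ) + 1)) atTop (𝓝[>] 0) :=
    tendsto_nhdsWithin_iff.2 ⟨tendsto_one_div_add_atTop_nhds_zero_nat,
      Eventually.of_forall fun n => hpos n⟩
  refine measurable_of_tendsto_metrizable
    (f := fun (n : ℕ) (y : Ia a) => Real.Gamma (1 - a) * (1 / ((n : ℝ) + 1)) ^ a *
      (divCount y.val t (1 / ((n : ℝ) + 1)) : ℝ)) (fun n => ?_) ?_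
  · exact measurable_const.mul (measurable_from_nat.comp (measurable_divCount hE t (hpos n)))
  · rw [tendsto_pi_nhds]
    intro y
    obtain ⟨d, hd⟩ := exists_hasDiversity y t
    have hlim : diversity a y.val t = d := Tendsto.limUnder_eq hd
    rw [hlim]
    exact Tendsto.comp hd hseq

lemma measurable_totalDiversity {a : ℝ} [MeasurableSpace (Ia a)]
    (hE : ∀ p q : ℝ, p ≤ q → MeasurableSet {y : Ia a | Spans p q y.val}) :
    Measurable fun y : Ia a => totalDiversity a y.val := by
  refine measurable_of_tendsto_metrizable
    (f := fun (n : ℕ) (y : Ia a) => diversity a y.val n) (fun n => measurable_diversity hE n) ?_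
  rw [tendsto_pi_nhds]
  intro y
  apply tendsto_const_nhds.congr'
  obtain ⟨k, hk⟩ := exists_nat_ge y.val.length
  filter_upwards [eventually_ge_atTop k] with n hn
  have hle : y.val.length ≤ n := hk.trans (by exact_mod_cast hn)
  unfold totalDiversity diversity
  simp only [divCount_of_length_le y.val hle]

/-! ### Measurability of the balls of `d_α` -/

/-- The event that the rationals in `t` select blocks of `y` which, paired with the prescribed
blocks of `x`, form a matching of distortion at most `δ`. -/
def BallEvent (a : ℝ) (x : IntervalPartition) (δ : ℝ) (t : Finset (x.blocks × ℚ))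
    (y : IntervalPartition) : Prop :=
  (∀ e ∈ t, Spans e.2 e.2 y) ∧
  (∀ e ∈ t, ∀ e' ∈ t, e ≠ e' →
    (e.1.1.2 ≤ e'.1.1.1 ∧ (blk e.2 y).2 ≤ (blk e'.2 y).1) ∨
    (e'.1.1.2 ≤ e.1.1.1 ∧ (blk e'.2 y).2 ≤ (blk e.2 y).1)) ∧
  (∑ e ∈ t, |mass e.1.1 - mass (blk e.2 y)|) + x.length - ∑ e ∈ t, mass e.1.1 ≤ δ ∧
  (∑ e ∈ t, |mass e.1.1 - mass (blk e.2 y)|) + y.length - ∑ e ∈ t, mass (blk e.2 y) ≤ δ ∧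
  (∀ e ∈ t, |blockDiversity a x e.1.1 - diversity a y e.2| ≤ δ) ∧
  |totalDiversity a x - totalDiversity a y| ≤ δ

lemma blockDiversity_eq (a : ℝ) {β : IntervalPartition} {U : ℝ × ℝ} (hU : U ∈ β.blocks)
    {q : ℝ} (hq : q ∈ Ioo U.1 U.2) : blockDiversity a β U = diversity a β q := by
  have := β.blocks_lt U hU
  exact diversity_eq_of_mem_block a hU ⟨by linarith, by linarith⟩ hq

/-- A matching of `x` with `y` can be recorded by countable data not depending on `y`: each block of
`y` is named by a rational that it contains. -/
lemma exists_close_iff (a : ℝ) (x y : IntervalPartition) (δ : ℝ) :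
    (∃ s, Close (blockDiversity a) (totalDiversity a) x y s δ) ↔
      ∃ t : Finset (x.blocks × ℚ), BallEvent a x δ t y := by
  classical
  constructor
  · rintro ⟨s, h⟩
    have hm := h.matching
    have hex : ∀ e : s, ∃ q : ℚ, e.1.2.1 < q ∧ (q : ℝ) < e.1.2.2 := fun e =>
      exists_rat_btwn (y.blocks_lt _ (hm.1 e.1 e.2).2)
    choose ρ hρ using hex
    have hblk : ∀ e : s, blk (ρ e) y = e.1.2 := fun e =>
      blk_eq (hm.1 e.1 e.2).2 (hρ e).1 (hρ e).2
    let φ : s → x.blocks × ℚ := fun e => (⟨e.1.1, (hm.1 e.1 e.2).1⟩, ρ e)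
    have hφ : Function.Injective φ := by
      intro e e' heq
      have h1 : e.1.1 = e'.1.1 := congrArg (fun z => z.1.1) heq
      exact Subtype.ext (hm.inj_fst e.2 e'.2 h1)
    have hsum : ∀ f : (ℝ × ℝ) × (ℝ × ℝ) → ℝ, ∑ e : s, f e.1 = ∑ e ∈ s, f e := fun f =>
      Finset.sum_coe_sort s f
    refine ⟨Finset.univ.image φ, ?_, ?_, ?_, ?_, ?_, h.tot⟩
    · intro e he
      obtain ⟨e, _, rfl⟩ := Finset.mem_image.1 he
      exact ⟨_, (hm.1 e.1 e.2).2, hρ e⟩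
    · intro e he e' he' hne
      obtain ⟨e, _, rfl⟩ := Finset.mem_image.1 he
      obtain ⟨e', _, rfl⟩ := Finset.mem_image.1 he'
      have := hm.2 e.1 e.2 e'.1 e'.2 (fun h => hne (congrArg φ (Subtype.ext h)))
      simpa only [φ, hblk] using this
    · simp only [Finset.sum_image hφ.injOn, φ, hblk]
      rw [hsum (fun e => |mass e.1 - mass e.2|), hsum (fun e => mass e.1)]
      exact h.left
    · simp only [Finset.sum_image hφ.injOn, φ, hblk]
      rw [hsum (fun e => |mass e.1 - mass e.2|), hsum (fun e => mass e.2)]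
      exact h.right
    · intro e he
      obtain ⟨e, _, rfl⟩ := Finset.mem_image.1 he
      have := h.div e.1 e.2
      rwa [blockDiversity_eq a (hm.1 e.1 e.2).2 (hρ e)] at this
  · rintro ⟨t, h1, h2, h3, h4, h5, h6⟩
    let φ : x.blocks × ℚ → (ℝ × ℝ) × (ℝ × ℝ) := fun e => (e.1.1, blk e.2 y)
    have hφ : Set.InjOn φ t := by
      intro e he e' he' heq
      by_contra hne
      have h7 : e.1.1 = e'.1.1 := congrArg Prod.fst heq
      have h8 := x.blocks_lt _ e'.1.2
      rcases h2 e he e' he' hne with h | h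
      · rw [h7] at h
        linarith [h.1]
      · rw [h7] at h
        linarith [h.1]
    refine ⟨t.image φ, ⟨?_, ?_⟩, ?_, ?_, ?_, h6⟩
    · intro e he
      obtain ⟨e₀, he₀, rfl⟩ := Finset.mem_image.1 he
      exact ⟨e₀.1.2, (blk_mem (h1 e₀ he₀)).1⟩
    · intro e he e' he' hne
      obtain ⟨e₀, he₀, rfl⟩ := Finset.mem_image.1 he
      obtain ⟨e₁, he₁, rfl⟩ := Finset.mem_image.1 he'
      exact h2 e₀ he₀ e₁ he₁ (fun h => hne (congrArg φ h))
    · simp only [Finset.sum_image hφ]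
      exact h3
    · simp only [Finset.sum_image hφ]
      exact h4
    · intro e he
      obtain ⟨e₀, he₀, rfl⟩ := Finset.mem_image.1 he
      have hb := blk_mem (h1 e₀ he₀)
      change |blockDiversity a x e₀.1.1 - blockDiversity a y (blk e₀.2 y)| ≤ δ
      rw [blockDiversity_eq a hb.1 hb.2]
      exact h5 e₀ he₀

lemma measurableSet_ballEvent {a : ℝ} [MeasurableSpace (Ia a)]
    (hE : ∀ p q : ℝ, p ≤ q → MeasurableSet {y : Ia a | Spans p q y.val})
    (hlen : Measurable fun y : Ia a => y.val.length) (x : IntervalPartition) (δ : ℝ)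
    (t : Finset (x.blocks × ℚ)) : MeasurableSet {y : Ia a | BallEvent a x δ t y.val} := by
  have hlo := measurable_blk_left hE
  have hhi := measurable_blk_right hE
  have hmass : ∀ q : ℝ, Measurable fun y : Ia a => mass (blk q y.val) := fun q =>
    (hhi q).sub (hlo q)
  have hcount : Countable x.blocks := (countable_blocks x).to_subtype
  have hsum : Measurable fun y : Ia a => ∑ e ∈ t, |mass e.1.1 - mass (blk e.2 y.val)| :=
    Finset.measurable_sum _ fun e _ => (measurable_const.sub (hmass e.2)).abs
  rw [measurableSet_setOfPred]
  unfold BallEvent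
  refine .and ?_ (.and ?_ (.and ?_ (.and ?_ (.and ?_ ?_))))
  · exact .forall fun e => measurable_const.imp (measurableSet_setOfPred.1 (hE e.2 e.2 le_rfl))
  · refine .forall fun e => measurable_const.imp (.forall fun e' => measurable_const.imp
      (measurable_const.imp (.or (measurable_const.and ?_) (measurable_const.and ?_))))
    · exact measurableSet_setOfPred.1 (measurableSet_le (hhi _) (hlo _))
    · exact measurableSet_setOfPred.1 (measurableSet_le (hhi _) (hlo _))
  · exact measurableSet_setOfPred.1 (measurableSet_le
      ((hsum.add measurable_const).sub measurable_const) measurable_const)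
  · exact measurableSet_setOfPred.1 (measurableSet_le
      ((hsum.add hlen).sub (Finset.measurable_sum _ fun e _ => hmass e.2)) measurable_const)
  · exact .forall fun e => measurable_const.imp (measurableSet_setOfPred.1 (measurableSet_le
      (measurable_const.sub (measurable_diversity hE e.2)).abs measurable_const))
  · exact measurableSet_setOfPred.1 (measurableSet_le
      (measurable_const.sub (measurable_totalDiversity hE)).abs measurable_const)

lemma measurableSet_ball {a : ℝ} [MeasurableSpace (Ia a)]
    (hE : ∀ p q : ℝ, p ≤ q → MeasurableSet {y : Ia a | Spans p q y.val})
    (hlen : Measurable fun y : Ia a => y.val.length) (x : Ia a) (r : ℝ) :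
    MeasurableSet {y : Ia a | dA a x.val y.val < r} := by
  have : {y : Ia a | dA a x.val y.val < r} =
      {y : Ia a | ∃ δ : ℚ, (δ : ℝ) < r ∧ ∃ t : Finset (x.val.blocks × ℚ),
        BallEvent a x.val δ t y.val} := by
    ext y
    change dA a x.val y.val < r ↔ ∃ δ : ℚ, (δ : ℝ) < r ∧ ∃ t : Finset (x.val.blocks × ℚ),
        BallEvent a x.val δ t y.val
    rw [dA_eq, dG_lt_iff]
    simp only [← exists_close_iff]
    constructor
    · rintro ⟨δ, hδ, s, h⟩
      obtain ⟨δ', h1, h2⟩ := exists_rat_btwn hδ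
      exact ⟨δ', h2, s, h.mono h1.le⟩
    · rintro ⟨δ, hδ, s, h⟩
      exact ⟨δ, hδ, s, h⟩
  rw [this, measurableSet_setOfPred]
  have hcount : Countable x.val.blocks := (countable_blocks x.val).to_subtype
  exact .exists fun δ => measurable_const.and (.exists fun t =>
    measurableSet_setOfPred.1 (measurableSet_ballEvent hE hlen x.val δ t))

/-! ### Comparison of the Borel σ-algebras -/

/-- The topology of `d_α` is second countable, so its Borel σ-algebra is generated by the balls of
`d_α`, and each of these is Borel for `d_H`. -/
lemma borel_dA_le (a : ℝ) :
    @borel (Ia a) (topOfDist a fun x y => dA a x.val y.val) ≤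
      @borel (Ia a) (topOfDist a fun x y => dH x.val y.val) := by
  have hsc : @SecondCountableTopology (Ia a) (topOfDist a fun x y => dA a x.val y.val) := by
    have heq : topOfDist a (fun x y => dA a x.val y.val) =
        topOfDist a (fun x y => dG (blockDiversity a) (totalDiversity a) x.val y.val) :=
      congrArg (topOfDist a) (by funext x y; exact dA_eq a _ _)
    rw [heq]
    exact secondCountable_topOfDist a _ _
  rw [@borel_eq_generateFrom_of_subbasis _ _ (topOfDist a fun x y => dA a x.val y.val) hsc rfl]
  apply MeasurableSpace.generateFrom_le
  rintro s ⟨x, r, rfl⟩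
  let t := topOfDist a fun x y => dH x.val y.val
  let : MeasurableSpace (Ia a) := borel (Ia a)
  have hE : ∀ p q : ℝ, p ≤ q → MeasurableSet {y : Ia a | Spans p q y.val} := fun p q hpq =>
    MeasurableSpace.measurableSet_generateFrom (isOpen_spans a hpq)
  have hlen : Measurable fun y : Ia a => y.val.length := measurable_of_Ioi fun c =>
    MeasurableSpace.measurableSet_generateFrom (isOpen_length_gt a c)
  exact measurableSet_ball hE hlen x r

lemma topOfDist_dA_le (a : ℝ) :
    topOfDist a (fun x y => dA a x.val y.val) ≤ topOfDist a fun x y => dHp x.val y.val := by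
  apply topOfDist_le a 1 one_pos
  · intro x
    rw [dA_eq, dG_self]
  · intro x y z
    simp only [dHp_eq]
    exact dG_triangle _ _ _
  · intro x y
    rw [one_mul]
    exact dHp_le_dA a _ _

lemma topOfDist_dHp_le (a : ℝ) :
    topOfDist a (fun x y => dHp x.val y.val) ≤ topOfDist a fun x y => dH x.val y.val := by
  apply topOfDist_le a 2 two_pos
  · intro x
    rw [dHp_eq, dG_self]
  · intro x y z
    exact dH_triangle _ _ _
  · intro x y
    exact dH_le_dHp _ _

end SameBorel

open IntervalPartition in
/-- on `I_α` the metrics `d_α`, `d_H` and `d_H'` generate the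
same Borel σ-algebra. -/
theorem same_borel_sigma_algebra (a : ℝ) (ha : 0 < a) (ha' : a < 1) :
    @borel (Ia a) (topOfDist a fun x y => dA a x.val y.val) =
      @borel (Ia a) (topOfDist a fun x y => dH x.val y.val) ∧
    @borel (Ia a) (topOfDist a fun x y => dA a x.val y.val) =
      @borel (Ia a) (topOfDist a fun x y => dHp x.val y.val) := by
  have h1 := borel_anti (SameBorel.topOfDist_dA_le a)
  have h2 := borel_anti (SameBorel.topOfDist_dHp_le a)
  have h3 := SameBorel.borel_dA_le a
  exact ⟨le_antisymm h3 (h2.trans h1), le_antisymm (h3.trans h2) h1⟩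
end
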